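/- arXiv:1507.06362 — 17 statements merged into one kernel-verified Lean document; each statement's English description precedes it below -/
import Mathlib

section
/- Every closed subspace of a charming space is a charming space; that is, if X is a charming topological space and A is a closed subset of X, then A with the subspace topology is a charming space. -/
open Set Function TopologicalSpace

universe u

/-- A map between topological spaces is *perfect* if it is continuous, closed, and
every fiber is compact. -/
def PerfectMap {Y : Type*} {Z : Type*} [TopologicalSpace Y] [TopologicalSpace Z]
    (f : Y → Z) : Prop :=
  Continuous f ∧ IsClosedMap f ∧ ∀ z : Z, IsCompact (f ⁻¹' {z})

/-- A topological space `X` is a *Lindelöf Σ-space* if there exist a topological space `Y`,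
a continuous surjection from `Y` onto `X`, and a perfect surjection from `Y` onto some
second-countable space. -/
def IsLindelofSigma (X : Type u) [TopologicalSpace X] : Prop :=
  ∃ (Y : Type u) (tY : TopologicalSpace Y) (Z : Type u) (tZ : TopologicalSpace Z),
    @SecondCountableTopology Z tZ ∧
    (∃ f : Y → X, @Continuous Y X tY _ f ∧ Surjective f) ∧
    (∃ g : Y → Z, @PerfectMap Y Z tY tZ g ∧ Surjective g)

/-- A topological space `X` is a *charming space* if there is a subset `Y` of `X` that is a
Lindelöf Σ-space in the subspace topology and such that for every open `U ⊇ Y`,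
the set `X \ U` is a Lindelöf Σ-space in the subspace topology. -/
def IsCharming (X : Type u) [TopologicalSpace X] : Prop :=
  ∃ Y : Set X, IsLindelofSigma Y ∧
    ∀ U : Set X, IsOpen U → Y ⊆ U → IsLindelofSigma ↥(Uᶜ)

/-- A *CL-charming* space: the shell `Y` can be chosen closed. -/
def IsCLCharming (X : Type u) [TopologicalSpace X] : Prop :=
  ∃ Y : Set X, IsClosed Y ∧ IsLindelofSigma Y ∧
    ∀ U : Set X, IsOpen U → Y ⊆ U → IsLindelofSigma ↥(Uᶜ)

/-- A *CO-charming* space: the shell `Y` can be chosen compact. -/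
def IsCOCharming (X : Type u) [TopologicalSpace X] : Prop :=
  ∃ Y : Set X, IsCompact Y ∧ IsLindelofSigma Y ∧
    ∀ U : Set X, IsOpen U → Y ⊆ U → IsLindelofSigma ↥(Uᶜ)

/-- A space has a *countable network* if there is a countable family `N` of subsets such that
every point in every open set `V` is contained in a member of `N` contained in `V`. -/
def HasCountableNetwork (X : Type u) [TopologicalSpace X] : Prop :=
  ∃ N : Set (Set X), N.Countable ∧
    ∀ x : X, ∀ V : Set X, IsOpen V → x ∈ V → ∃ n ∈ N, x ∈ n ∧ n ⊆ V

/-- A topological space `X` is *weak (4,4)-structured* if there exist a topological space `Y`,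
a continuous surjection from `Y` onto `X`, and a perfect surjection from `Y` onto some
charming space. -/
def IsWeak44Structured (X : Type u) [TopologicalSpace X] : Prop :=
  ∃ (Y : Type u) (tY : TopologicalSpace Y) (M : Type u) (tM : TopologicalSpace M),
    @IsCharming M tM ∧
    (∃ f : Y → X, @Continuous Y X tY _ f ∧ Surjective f) ∧
    (∃ g : Y → M, @PerfectMap Y M tY tM g ∧ Surjective g)

theorem IsLindelofSigma.of_isClosedEmbedding {X B : Type u} [TopologicalSpace X]
    [TopologicalSpace B] (hX : IsLindelofSigma X) (e : B → X)
    (he : Topology.IsClosedEmbedding e) : IsLindelofSigma B := by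
  obtain ⟨Y, tY, Z, tZ, hZ, ⟨f, hf, hfs⟩, g, ⟨hg, hgc, hgk⟩, hgs⟩ := hX
  have hC : IsClosed (f ⁻¹' range e) := he.isClosed_range.preimage hf
  have hr : ∀ y : ↥(f ⁻¹' range e), ∃ b, e b = f y := fun y => y.2
  choose r hr using hr
  refine ⟨↥(f ⁻¹' range e), inferInstance, ↥(g '' (f ⁻¹' range e)), inferInstance,
    inferInstance, ⟨r, ?_, ?_⟩, fun y => ⟨g y, mem_image_of_mem g y.2⟩, ⟨?_, ?_, ?_⟩, ?_⟩
  · rw [he.isEmbedding.continuous_iff]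
    have h : e ∘ r = f ∘ Subtype.val := funext hr
    rw [h]
    exact hf.comp continuous_subtype_val
  · intro b
    obtain ⟨y, hy⟩ := hfs (e b)
    refine ⟨⟨y, b, hy.symm⟩, he.injective ?_⟩
    rw [hr]
    exact hy
  · exact (hg.comp continuous_subtype_val).subtype_mk _
  · intro S hS
    have h1 : IsClosed (g '' (Subtype.val '' S)) :=
      hgc _ (hC.isClosedMap_subtype_val _ hS)
    convert h1.preimage (continuous_subtype_val (p := (· ∈ g '' (f ⁻¹' range e)))) using 1
    ext z
    constructor
    · rintro ⟨y, hy, rfl⟩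
      exact ⟨y, ⟨y, hy, rfl⟩, rfl⟩
    · rintro ⟨_, ⟨y, hy, rfl⟩, h⟩
      exact ⟨y, hy, Subtype.ext h⟩
  · intro z
    convert hC.isClosedEmbedding_subtypeVal.isCompact_preimage (hgk z.1) using 1
    ext y
    simp [Subtype.ext_iff]
  · rintro ⟨_, y, hy, rfl⟩
    exact ⟨⟨y, hy⟩, rfl⟩

/-- Every closed subspace of a charming space is a charming space. -/
theorem closed_subspace_of_charming {X : Type u} [TopologicalSpace X] [T35Space X]
    (hX : IsCharming X) (A : Set X) (hA : IsClosed A) :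
    IsCharming A := by
  obtain ⟨Y, hY, h⟩ := hX
  refine ⟨Subtype.val ⁻¹' Y, ?_, ?_⟩
  · refine hY.of_isClosedEmbedding (fun a => ⟨a.1.1, a.2⟩) ⟨⟨⟨?_⟩, ?_⟩, ?_⟩
    · simp only [instTopologicalSpaceSubtype, induced_compose]
      rfl
    · intro a b hab
      have hv := congrArg Subtype.val hab
      exact Subtype.ext (Subtype.ext hv)
    · convert hA.preimage (continuous_subtype_val (p := (· ∈ Y))) using 1
      ext y
      constructor
      · rintro ⟨a, rfl⟩
        exact a.1.2
      · intro hy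
        exact ⟨⟨⟨y.1, hy⟩, y.2⟩, rfl⟩
  · intro U hU hYU
    obtain ⟨V, hV, rfl⟩ := isOpen_induced_iff.1 hU
    have hW := h (V ∪ Aᶜ) (hV.union hA.isOpen_compl) (by
      intro y hy
      by_cases hyA : y ∈ A
      · exact Or.inl (hYU (a := ⟨y, hyA⟩) hy)
      · exact Or.inr hyA)
    refine hW.of_isClosedEmbedding
      (fun a => ⟨a.1.1, fun h => h.elim a.2 (fun h => h a.1.2)⟩) ⟨⟨⟨?_⟩, ?_⟩, ?_⟩
    · simp only [instTopologicalSpaceSubtype, induced_compose]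
      rfl
    · intro a b hab
      have hv := congrArg Subtype.val hab
      exact Subtype.ext (Subtype.ext hv)
    · convert isClosed_univ using 1
      refine eq_univ_of_forall fun y => ?_
      have hyA : y.1 ∈ A := by
        by_contra hn
        exact y.2 (Or.inr hn)
      exact ⟨⟨⟨y.1, hyA⟩, fun hv => y.2 (Or.inl hv)⟩, rfl⟩
end

section
/- The image of a charming space under a continuous map is a charming space; that is, if X is a charming space, Z is a topological space, and f : X → Z is a continuous surjection, then Z is a charming space. -/
open Set Function TopologicalSpace

universe u

theorem IsLindelofSigma.of_surjective {A B : Type u} [TopologicalSpace A] [TopologicalSpace B]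
    (hA : IsLindelofSigma A) (g : A → B) (hg : Continuous g) (hs : Surjective g) :
    IsLindelofSigma B := by
  obtain ⟨Y, tY, Z, tZ, hZ, ⟨p, hp, hps⟩, hq⟩ := hA
  exact ⟨Y, tY, Z, tZ, hZ, ⟨g ∘ p, hg.comp hp, hs.comp hps⟩, hq⟩

/-- The image of a charming space under a continuous surjection is a charming space. -/
theorem continuous_image_of_charming {X : Type u} {Z : Type u}
    [TopologicalSpace X] [T35Space X] [TopologicalSpace Z] [T35Space Z]
    (hX : IsCharming X) (f : X → Z) (hf : Continuous f) (hsurj : Surjective f) :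
    IsCharming Z := by
  obtain ⟨Y, hY, hU⟩ := hX
  refine ⟨f '' Y, ?_, fun U hUo hYU => ?_⟩
  · exact hY.of_surjective (fun y => ⟨f y, mem_image_of_mem f y.2⟩) (by fun_prop)
      (by rintro ⟨_, y, hy, rfl⟩; exact ⟨⟨y, hy⟩, rfl⟩)
  · exact (hU (f ⁻¹' U) (hUo.preimage hf) (image_subset_iff.mp hYU)).of_surjective
      (fun x => ⟨f x, x.2⟩) (by fun_prop)
      (by
        rintro ⟨z, hz⟩
        obtain ⟨x, rfl⟩ := hsurj z
        exact ⟨⟨x, hz⟩, rfl⟩)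
end

section
/- The preimage of a charming space under a perfect map is a charming space; that is, if f : X → Z is a perfect surjection between topological spaces and Z is a charming space, then X is a charming space. -/
open Set Function TopologicalSpace

universe u

theorem perfectMap_iff_isProperMap {A B : Type*} [TopologicalSpace A] [TopologicalSpace B]
    (f : A → B) : PerfectMap f ↔ IsProperMap f :=
  isProperMap_iff_isClosedMap_and_compact_fibers.symm

theorem isProperMap_pullback_snd {A B Y : Type*} [TopologicalSpace A] [TopologicalSpace B]
    [TopologicalSpace Y] {f : A → B} (hf : IsProperMap f) {h : Y → B} (hh : Continuous h) :
    IsProperMap (fun p : {p : A × Y // f p.1 = h p.2} => p.1.2) := by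
  rw [isProperMap_iff_ultrafilter]
  refine ⟨by fun_prop, fun U y hy => ?_⟩
  have h1 : Filter.Tendsto f (U.map (fun p => p.1.1) : Ultrafilter A) (nhds (h y)) := by
    have h2 := (hh.tendsto y).comp hy
    rw [Ultrafilter.coe_map, Filter.tendsto_map'_iff]
    refine h2.congr fun p => p.2.symm
  obtain ⟨a, ha, hUa⟩ := hf.ultrafilter_le_nhds_of_tendsto h1
  refine ⟨⟨(a, y), ha⟩, rfl, ?_⟩
  rw [nhds_subtype_eq_comap, nhds_prod_eq, ← Filter.tendsto_iff_comap]
  exact Filter.Tendsto.prodMk hUa hy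

theorem isLindelofSigma_of_isProperMap {A B : Type u} [TopologicalSpace A] [TopologicalSpace B]
    {f : A → B} (hf : IsProperMap f) (hB : IsLindelofSigma B) : IsLindelofSigma A := by
  obtain ⟨Y, tY, M, tM, hM, ⟨h, hh, hhs⟩, g, hg, -⟩ := hB
  rw [perfectMap_iff_isProperMap] at hg
  have hk := hg.comp (isProperMap_pullback_snd hf hh)
  refine ⟨{p : A × Y // f p.1 = h p.2}, inferInstance, range (g ∘ fun p : {p : A × Y // f p.1 = h p.2} => p.1.2),
    inferInstance, inferInstance, ⟨fun p => p.1.1, by fun_prop, fun a => ?_⟩,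
    rangeFactorization _, ?_, rangeFactorization_surjective⟩
  · obtain ⟨y, hy⟩ := hhs (f a)
    exact ⟨⟨(a, y), hy.symm⟩, rfl⟩
  · rw [perfectMap_iff_isProperMap]
    exact isProperMap_of_comp_of_inj (hk.continuous.subtype_mk _) continuous_subtype_val hk
      Subtype.val_injective

/-- The preimage of a charming space under a perfect surjection is a charming space. -/
theorem perfect_preimage_of_charming {X : Type u} {Z : Type u}
    [TopologicalSpace X] [T35Space X] [TopologicalSpace Z] [T35Space Z]
    (f : X → Z) (hf : PerfectMap f) (hsurj : Surjective f)
    (hZ : IsCharming Z) :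
    IsCharming X := by
  obtain ⟨Y, hY, hU⟩ := hZ
  have hp := (perfectMap_iff_isProperMap f).1 hf
  refine ⟨f ⁻¹' Y, ?_, fun U hUo hYU => ?_⟩
  · exact isLindelofSigma_of_isProperMap (hp.restrictPreimage Y) hY
  · have hC := hU (f '' Uᶜ)ᶜ (hp.isClosedMap _ hUo.isClosed_compl).isOpen_compl (by
      rintro y hy ⟨x, hx, rfl⟩
      exact hx (hYU hy))
    have hm : MapsTo f Uᶜ (f '' Uᶜ)ᶜᶜ := fun x hx h => h ⟨x, hx, rfl⟩
    refine isLindelofSigma_of_isProperMap (f := hm.restrict) ?_ hC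
    exact isProperMap_of_comp_of_inj (hp.continuous.restrict hm) continuous_subtype_val
      (hp.comp hUo.isClosed_compl.isProperMap_subtypeVal) Subtype.val_injective
end

section
/- A countable union of charming subspaces is charming: if X is a topological space and X = ⋃_{k∈ℕ} X_k where each X_k ⊆ X is a charming space in the subspace topology, then X is a charming space. -/
open Set Function TopologicalSpace

universe u

/-- A space covered by countably many continuous images of Lindelöf Σ-spaces is
Lindelöf Σ. -/
theorem isLindelofSigma_of_cover {X : Type u} [TopologicalSpace X]
    (S : ℕ → Type u) [∀ k, TopologicalSpace (S k)] (hS : ∀ k, IsLindelofSigma (S k))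
    (h : ∀ k, S k → X) (hc : ∀ k, Continuous (h k)) (hs : ∀ x, ∃ k s, h k s = x) :
    IsLindelofSigma X := by
  choose Y tY Z tZ hZ hf hg using hS
  choose f hfc hfs using hf
  choose g hgp hgs using hg
  refine ⟨Σ k, Y k, inferInstance, Σ k, Z k, inferInstance, inferInstance,
    ⟨fun p => h p.1 (f p.1 p.2), ?_, ?_⟩, ⟨Sigma.map id g, ⟨?_, ?_, ?_⟩, ?_⟩⟩
  · exact continuous_sigma fun k => (hc k).comp (hfc k)
  · intro x
    obtain ⟨k, s, rfl⟩ := hs x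
    obtain ⟨y, rfl⟩ := hfs k s
    exact ⟨⟨k, y⟩, rfl⟩
  · exact Continuous.sigma_map fun k => (hgp k).1
  · intro C hC
    rw [isClosed_sigma_iff] at hC ⊢
    intro k
    have : Sigma.mk k ⁻¹' (Sigma.map id g '' C) = g k '' (Sigma.mk k ⁻¹' C) := by
      ext z
      constructor
      · rintro ⟨⟨j, y⟩, hy, he⟩
        simp only [Sigma.map, id] at he
        cases he
        exact ⟨y, hy, rfl⟩
      · rintro ⟨y, hy, rfl⟩
        exact ⟨⟨k, y⟩, hy, rfl⟩
    rw [this]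
    exact (hgp k).2.1 _ (hC k)
  · rintro ⟨k, z⟩
    have : Sigma.map id g ⁻¹' {(⟨k, z⟩ : Σ k, Z k)} = Sigma.mk k '' (g k ⁻¹' {z}) := by
      ext ⟨j, y⟩
      constructor
      · intro he
        simp only [Sigma.map, id, mem_preimage, mem_singleton_iff] at he
        cases he
        exact ⟨y, rfl, rfl⟩
      · rintro ⟨y', hy, he⟩
        cases he
        simp only [mem_preimage, mem_singleton_iff] at hy
        simp [Sigma.map, hy]
    rw [this]
    exact ((hgp k).2.2 z).image continuous_sigmaMk
  · rintro ⟨k, z⟩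
    obtain ⟨y, rfl⟩ := hgs k z
    exact ⟨⟨k, y⟩, rfl⟩

/-- A countable union of charming subspaces is charming. -/
theorem countable_union_of_charming {X : Type u} [TopologicalSpace X] [T35Space X]
    (Xk : ℕ → Set X) (hcover : (⋃ k, Xk k) = Set.univ)
    (hch : ∀ k : ℕ, IsCharming ↥(Xk k)) :
    IsCharming X := by
  choose Y hY hU using hch
  have hx : ∀ x, ∃ k, x ∈ Xk k := fun x => by
    have : x ∈ ⋃ k, Xk k := hcover ▸ mem_univ x
    exact mem_iUnion.1 this
  refine ⟨⋃ k, Subtype.val '' Y k, ?_, ?_⟩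
  · refine isLindelofSigma_of_cover (fun k => Y k) hY
      (fun k y => ⟨y.1.1, mem_iUnion.2 ⟨k, y.1, y.2, rfl⟩⟩) (fun k => ?_) ?_
    · exact (continuous_subtype_val.comp continuous_subtype_val).subtype_mk _
    · rintro ⟨x, hx⟩
      obtain ⟨k, y, hy, rfl⟩ := mem_iUnion.1 hx
      exact ⟨k, ⟨y, hy⟩, rfl⟩
  · intro U hUo hYU
    refine isLindelofSigma_of_cover
      (fun k => ↥((Subtype.val ⁻¹' U : Set (Xk k))ᶜ))
      (fun k => hU k _ (hUo.preimage continuous_subtype_val)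
        fun y hy => hYU (mem_iUnion.2 ⟨k, y, hy, rfl⟩))
      (fun k y => ⟨y.1.1, y.2⟩) (fun k => ?_) ?_
    · exact (continuous_subtype_val.comp continuous_subtype_val).subtype_mk _
    · rintro ⟨x, hxU⟩
      obtain ⟨k, hk⟩ := hx x
      exact ⟨k, ⟨⟨x, hk⟩, hxU⟩, rfl⟩
end

section
/- Let X be the one-point Lindelöfication of an uncountable discrete space D: explicitly, X = D ∪ {p} with p ∉ D, every point of D is isolated in X, and the open neighborhoods of p are exactly the sets {p} ∪ U where U ⊆ D and D \ U is countable. Then: (1) X is a charming space; (2) X is not a Lindelöf Σ-space; and (3) the product X × X (with the product topology) is not a charming space. -/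
open Set Function TopologicalSpace

universe u

/-- Compact sets are finite in a space in which complements of countable sets are open. -/
theorem finite_of_compact_aux {X : Type*} [TopologicalSpace X]
    (hX : ∀ A : Set X, A.Countable → IsOpen Aᶜ) {K : Set X} (hK : IsCompact K) : K.Finite := by
  by_contra hinf
  obtain ⟨A, hAK, hAinf, hAc⟩ : ∃ A ⊆ K, A.Infinite ∧ A.Countable := by
    have hinf' : K.Infinite := hinf
    refine ⟨range (fun n : ℕ => (hinf'.natEmbedding K n : X)), ?_, ?_, countable_range _⟩
    · rintro _ ⟨n, rfl⟩
      exact (hinf'.natEmbedding K n).2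
    · exact infinite_range_of_injective
        (Subtype.val_injective.comp (hinf'.natEmbedding K).injective)
  obtain ⟨t, ht⟩ := hK.elim_finite_subcover (fun a : A => (A \ {(a : X)})ᶜ)
    (fun a => hX _ (hAc.mono sdiff_subset)) (by
      intro x hx
      obtain ⟨a, ha⟩ := hAinf.nonempty
      by_cases hxA : x ∈ A
      · exact mem_iUnion.2 ⟨⟨x, hxA⟩, by simp⟩
      · exact mem_iUnion.2 ⟨⟨a, ha⟩, by simp [hxA]⟩)
  apply hAinf
  refine (t.finite_toSet.image Subtype.val).subset ?_
  intro c hc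
  obtain ⟨a, hat, hca⟩ := mem_iUnion₂.1 (ht (hAK hc))
  refine ⟨a, hat, ?_⟩
  by_contra hne
  exact hca ⟨hc, fun h => hne h.symm⟩

/-- A continuous image of a Lindelöf Σ-space in such a space is countable. -/
theorem countable_range_aux {X : Type u} {T : Type u} [TopologicalSpace X] [TopologicalSpace T]
    (hX : ∀ A : Set X, A.Countable → IsOpen Aᶜ) (hT : IsLindelofSigma T)
    (h : T → X) (hh : Continuous h) : (range h).Countable := by
  obtain ⟨Y, tY, Z, tZ, hZ, ⟨f₀, hf₀, hs⟩, g, ⟨hg, hgc, hgk⟩, -⟩ := hT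
  set f : Y → X := h ∘ f₀ with hfdef
  have hf : Continuous f := hh.comp hf₀
  have hr : range h = range f := by rw [hfdef, hs.range_comp]
  rw [hr]
  by_contra hunc
  let b := countableBasis Z
  let N : Set Z → Set X := fun B => f '' (g ⁻¹' B)
  let S : Set X := ⋃ B ∈ {B ∈ b | (N B).Countable}, N B
  have hS : S.Countable :=
    ((countable_countableBasis Z).mono (sep_subset _ _)).biUnion (fun B hB => hB.2)
  obtain ⟨x, ⟨y, rfl⟩, hxS⟩ : ∃ x ∈ range f, x ∉ S := by
    by_contra hcon
    push Not at hcon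
    exact hunc (hS.mono hcon)
  have hKfin : (f '' (g ⁻¹' {g y})).Finite := finite_of_compact_aux hX ((hgk _).image hf)
  have hch : ∀ B : Set Z, ∃ d : X, ¬ (N B).Countable → d ∈ N B ∧ d ∉ f '' (g ⁻¹' {g y}) := by
    intro B
    by_cases hB : (N B).Countable
    · exact ⟨f y, fun h => absurd hB h⟩
    · by_contra hcon
      push Not at hcon
      exact hB (hKfin.countable.mono fun d hd => (hcon d).2 hd)
  choose d hd using hch
  let E : Set X := d '' {B ∈ b | ¬ (N B).Countable}
  have hE : E.Countable := ((countable_countableBasis Z).mono (sep_subset _ _)).image d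
  have hU : IsOpen (f ⁻¹' Eᶜ) := (hX E hE).preimage hf
  have hW : IsOpen (g '' (f ⁻¹' Eᶜ)ᶜ)ᶜ := (hgc _ hU.isClosed_compl).isOpen_compl
  have hzW : g y ∈ (g '' (f ⁻¹' Eᶜ)ᶜ)ᶜ := by
    rintro ⟨y', hy', he⟩
    apply hy'
    rintro ⟨B, hB, hdB⟩
    exact (hd B hB.2).2 ⟨y', he, hdB.symm⟩
  obtain ⟨B, hBb, hzB, hBW⟩ := (isBasis_countableBasis Z).exists_subset_of_mem_open hzW hW
  by_cases hB : (N B).Countable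
  · exact hxS (mem_biUnion (show B ∈ {B ∈ b | (N B).Countable} from ⟨hBb, hB⟩) ⟨y, hzB, rfl⟩)
  · obtain ⟨y', hy', he⟩ := (hd B hB).1
    refine hBW hy' ⟨y', ?_, rfl⟩
    intro hcon
    exact hcon ⟨B, ⟨hBb, hB⟩, he.symm⟩

/-- A second-countable space is a Lindelöf Σ-space. -/
theorem sigma_of_secondCountable_aux (T : Type u) [tT : TopologicalSpace T]
    [hT : SecondCountableTopology T] : IsLindelofSigma T :=
  ⟨T, tT, T, tT, hT, ⟨id, continuous_id, surjective_id⟩, id,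
    ⟨continuous_id, IsClosedMap.id, fun z => by simp⟩, surjective_id⟩

/-- The one-point Lindelöfication `X = D ∪ {p}` of an uncountable discrete space is a
charming space which is not a Lindelöf Σ-space, and whose square is not charming. -/
theorem one_point_lindelofication_charming_not_sigma_and_square_not_charming
    {X : Type u} [TopologicalSpace X] (p : X)
    (hopen : ∀ U : Set X, IsOpen U ↔ (p ∈ U → (Uᶜ : Set X).Countable))
    (huncountable : ¬ (({p}ᶜ : Set X)).Countable) :
    IsCharming X ∧ ¬ IsLindelofSigma X ∧ ¬ IsCharming (X × X) := by
  have hX : ∀ A : Set X, A.Countable → IsOpen Aᶜ := fun A hA =>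
    (hopen _).2 fun _ => by rwa [compl_compl]
  have hX' : ¬ (univ : Set X).Countable := fun h => huncountable (h.mono (subset_univ _))
  have hns : ¬ IsLindelofSigma X := fun h => hX' (by
    simpa using countable_range_aux hX h id continuous_id)
  refine ⟨⟨{p}, ?_, ?_⟩, hns, ?_⟩
  · exact sigma_of_secondCountable_aux _
  · intro U hU hpU
    have hp : p ∈ U := hpU rfl
    have hc : Countable ↥(Uᶜ) := ((hopen U).1 hU hp).to_subtype
    have hdisc : DiscreteTopology ↥(Uᶜ) := by
      rw [discreteTopology_iff_isOpen_singleton]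
      intro x
      refine ⟨{(x : X)}, (hopen _).2 fun h => ?_, ?_⟩
      · exact absurd (show p ∈ U from hp) (by rw [mem_singleton_iff.1 h]; exact x.2)
      · ext y
        simp [Subtype.ext_iff]
    exact sigma_of_secondCountable_aux _
  · rintro ⟨Y, hY, hYU⟩
    have hA : (range fun y : Y => (y : X × X).1).Countable :=
      countable_range_aux hX hY _ (continuous_fst.comp continuous_subtype_val)
    obtain ⟨d, hdA⟩ : ∃ d, d ∉ insert p (range fun y : Y => (y : X × X).1) := by
      by_contra hcon
      push Not at hcon
      exact hX' ((hA.insert p).mono fun x _ => hcon x)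
    have hU : IsOpen (Prod.fst ⁻¹' ({d}ᶜ : Set X) : Set (X × X)) :=
      (hX _ (countable_singleton d)).preimage continuous_fst
    have hs := hYU _ hU (by
      intro y hy hyd
      exact hdA (Or.inr ⟨⟨y, hy⟩, hyd⟩))
    have hc := countable_range_aux hX hs (fun y => (y : X × X).2)
      (continuous_snd.comp continuous_subtype_val)
    refine hX' (hc.mono ?_)
    intro x _
    exact ⟨⟨(d, x), by simp⟩, rfl⟩
end

section
/- Every uncountable subspace of the Sorgenfrey line fails to be a Lindelöf Σ-space: if Y is an uncountable subset of the Sorgenfrey line, then Y with the subspace topology is not a Lindelöf Σ-space. -/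
open Set Function TopologicalSpace

universe u

/-- The Sorgenfrey line: `ℝ` with the topology generated by half-open intervals `[a, b)`. -/
def sorgenfreyTopology : TopologicalSpace ℝ :=
  TopologicalSpace.generateFrom {s : Set ℝ | ∃ a b : ℝ, s = Set.Ico a b}

theorem sorgenfrey_isOpen_Iio_union_Ici (q x : ℝ) :
    @IsOpen ℝ sorgenfreyTopology (Set.Iio q ∪ Set.Ici x) := by
  have h : Set.Iio q ∪ Set.Ici x = (⋃ a : ℝ, Set.Ico a q) ∪ ⋃ b : ℝ, Set.Ico x b := by
    ext t
    simp only [mem_union, mem_Iio, mem_Ici, mem_iUnion, mem_Ico, exists_and_right, exists_and_left]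
    exact ⟨fun h => h.imp (fun h => ⟨⟨t, le_rfl⟩, h⟩) (fun h => ⟨h, exists_gt t⟩),
      fun h => h.imp (fun h => h.2) (fun h => h.1)⟩
  rw [h]
  have hI : ∀ a b : ℝ, @IsOpen ℝ sorgenfreyTopology (Set.Ico a b) := fun a b =>
    TopologicalSpace.GenerateOpen.basic _ ⟨a, b, rfl⟩
  exact @IsOpen.union _ _ _ sorgenfreyTopology (@isOpen_iUnion _ _ sorgenfreyTopology _ fun a => hI a q)
    (@isOpen_iUnion _ _ sorgenfreyTopology _ fun b => hI x b)

/-- Every uncountable subspace of the Sorgenfrey line fails to be a Lindelöf Σ-space. -/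
theorem uncountable_sorgenfrey_subspace_not_lindelofSigma
    (Y : Set ℝ) (hY : ¬ Y.Countable) :
    ¬ @IsLindelofSigma ↥Y (TopologicalSpace.induced (Subtype.val : Y → ℝ) sorgenfreyTopology) := by
  rintro ⟨W, tW, Z, tZ, hZ, ⟨f, hf, hfs⟩, ⟨g, ⟨hg, hgc, hgk⟩, hgs⟩⟩
  have hopen : ∀ q x : ℝ, IsOpen {w : W | (f w : ℝ) < q ∨ x ≤ (f w : ℝ)} := by
    intro q x
    have h1 := sorgenfrey_isOpen_Iio_union_Ici q x
    exact (@Continuous.isOpen_preimage _ _ _ (_) _ hf) _ ⟨_, h1, rfl⟩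
  have key : ∀ x : Y, ∃ p : countableBasis Z × ℚ, (p.2 : ℝ) < x ∧
      (∃ w, f w = x ∧ g w ∈ (p.1 : Set Z)) ∧
      ∀ w, g w ∈ (p.1 : Set Z) → (f w : ℝ) < p.2 ∨ (x : ℝ) ≤ f w := by
    intro x
    obtain ⟨w₀, hw₀⟩ := hfs x
    obtain ⟨q₀, hq₀⟩ := exists_rat_lt (x : ℝ)
    haveI : Nonempty {q : ℚ // (q : ℝ) < x} := ⟨⟨q₀, hq₀⟩⟩
    obtain ⟨⟨q, hq⟩, hcov⟩ := (hgk (g w₀)).elim_directed_cover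
      (fun q : {q : ℚ // (q : ℝ) < x} => {w : W | (f w : ℝ) < (q.1 : ℝ) ∨ (x : ℝ) ≤ (f w : ℝ)})
      (fun q => hopen _ _)
      (by
        intro w _
        rw [mem_iUnion]
        rcases lt_or_ge (f w : ℝ) x with h | h
        · obtain ⟨q, h1, h2⟩ := exists_rat_btwn h
          exact ⟨⟨q, h2⟩, Or.inl h1⟩
        · exact ⟨⟨q₀, hq₀⟩, Or.inr h⟩)
      (by
        apply Monotone.directed_le
        intro a b hab w hw
        have hab' : (a.1 : ℝ) ≤ (b.1 : ℝ) := by exact_mod_cast hab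
        exact hw.imp (fun h => lt_of_lt_of_le h hab') id)
    have hcl := hgc _ (hopen q x).isClosed_compl
    have hz : g w₀ ∈ (g '' {w : W | (f w : ℝ) < q ∨ (x : ℝ) ≤ (f w : ℝ)}ᶜ)ᶜ := by
      rintro ⟨w, hw, hgw⟩
      exact hw (hcov hgw)
    obtain ⟨B, hB, hzB, hBs⟩ :=
      (isBasis_countableBasis Z).exists_subset_of_mem_open hz hcl.isOpen_compl
    refine ⟨(⟨B, hB⟩, q), hq, ⟨w₀, hw₀, hzB⟩, fun w hw => ?_⟩
    by_contra hcon
    exact hBs hw ⟨w, hcon, rfl⟩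
  choose p hp1 hp2 hp3 using key
  have hlt : ∀ x y : Y, p x = p y → ¬ (x : ℝ) < y := by
    intro x y hxy hlt
    obtain ⟨w, hw, hgw⟩ := hp2 x
    have h1 := hp1 x
    rw [hxy] at hgw h1
    have := hp3 y w hgw
    rw [hw] at this
    rcases this with h | h <;> linarith
  have hinj : Injective p := fun x y h =>
    Subtype.ext (le_antisymm (not_lt.1 (hlt y x h.symm)) (not_lt.1 (hlt x y h)))
  haveI : Countable (countableBasis Z) := (countable_countableBasis Z).to_subtype
  exact hY (countable_coe_iff.1 hinj.countable)
end

section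
/- The Sorgenfrey line is a hereditarily Lindelöf space (every subspace is Lindelöf) which is not a charming space. -/
open Set Function TopologicalSpace

universe u

open scoped Topology

lemma sorg_exists_Ico {U : Set ℝ} (hU : IsOpen[sorgenfreyTopology] U) {x : ℝ} (hx : x ∈ U) :
    ∃ b, x < b ∧ Ico x b ⊆ U := by
  change GenerateOpen _ U at hU
  induction hU with
  | basic s hs =>
    obtain ⟨a, b, rfl⟩ := hs
    exact ⟨b, hx.2, Ico_subset_Ico_left hx.1⟩
  | univ => exact ⟨x + 1, by linarith, subset_univ _⟩
  | inter s t _ _ h1 h2 =>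
    obtain ⟨b, hb, hb'⟩ := h1 hx.1
    obtain ⟨c, hc, hc'⟩ := h2 hx.2
    refine ⟨min b c, lt_min hb hc, fun y hy => ⟨hb' ⟨hy.1, hy.2.trans_le (min_le_left _ _)⟩,
      hc' ⟨hy.1, hy.2.trans_le (min_le_right _ _)⟩⟩⟩
  | sUnion S _ ih =>
    obtain ⟨s, hs, hxs⟩ := hx
    obtain ⟨b, hb, hb'⟩ := ih s hs hxs
    exact ⟨b, hb, hb'.trans (subset_sUnion_of_mem hs)⟩

lemma sorg_isOpen_of {U : Set ℝ} (h : ∀ x ∈ U, ∃ b, x < b ∧ Ico x b ⊆ U) :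
    IsOpen[sorgenfreyTopology] U := by
  letI := sorgenfreyTopology
  refine isOpen_iff_forall_mem_open.2 fun x hx => ?_
  obtain ⟨b, hb, hb'⟩ := h x hx
  exact ⟨Ico x b, hb', GenerateOpen.basic _ ⟨x, b, rfl⟩, ⟨le_rfl, hb⟩⟩

lemma sorg_isOpen_of_isOpen {U : Set ℝ} (hU : IsOpen U) : IsOpen[sorgenfreyTopology] U := by
  refine sorg_isOpen_of fun x hx => ?_
  obtain ⟨b, hb, hb'⟩ := exists_Ico_subset_of_mem_nhds (hU.mem_nhds hx) ⟨x + 1, by linarith⟩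
  exact ⟨b, hb, hb'⟩

lemma sorg_lindelof (s : Set ℝ) : @IsLindelof ℝ sorgenfreyTopology s := by
  refine @isLindelof_of_countable_subcover ℝ sorgenfreyTopology s fun {ι} U hU hs => ?_
  obtain ⟨T, hT, hTU⟩ := isOpen_iUnion_countable (fun i => interior (U i))
    (fun i => isOpen_interior)
  set W := ⋃ i, interior (U i) with hW
  have key : ∀ x : ℝ, x ∈ s → ∃ q : ℚ, x < q ∧ Ioo x (q : ℝ) ⊆ W := by
    intro x hx
    obtain ⟨i, hi⟩ := mem_iUnion.1 (hs hx)
    obtain ⟨b, hb, hb'⟩ := sorg_exists_Ico (hU i) hi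
    obtain ⟨q, hq, hq'⟩ := exists_rat_btwn hb
    refine ⟨q, hq, Subset.trans ?_ (subset_iUnion _ i)⟩
    exact interior_maximal (fun y hy => hb' ⟨hy.1.le, hy.2.trans hq'⟩) isOpen_Ioo
  choose! q hq hqW using key
  have hcount : (s \ W).Countable := by
    refine Set.countable_of_injective_of_countable_image (f := q) ?_ (Set.to_countable _)
    intro x hx y hy hxy
    by_contra hne
    rcases lt_or_gt_of_ne hne with h | h
    · exact hy.2 (hqW x hx.1 ⟨h, by rw [hxy]; exact hq y hy.1⟩)
    · exact hx.2 (hqW y hy.1 ⟨h, by rw [← hxy]; exact hq x hx.1⟩)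
  have hex : ∀ x : ℝ, x ∈ s → ∃ i, x ∈ U i := fun x hx => mem_iUnion.1 (hs hx)
  rcases s.eq_empty_or_nonempty with rfl | ⟨x0, hx0⟩
  · exact ⟨∅, countable_empty, empty_subset _⟩
  haveI : Nonempty ι := ⟨(hex x0 hx0).choose⟩
  choose! j hj using hex
  refine ⟨T ∪ j '' (s \ W), hT.union (hcount.image j), fun x hx => ?_⟩
  by_cases hxW : x ∈ W
  · rw [← hTU] at hxW
    obtain ⟨i, hi, hxi⟩ := mem_iUnion₂.1 hxW
    exact mem_iUnion₂.2 ⟨i, Or.inl hi, interior_subset hxi⟩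
  · exact mem_iUnion₂.2 ⟨j x, Or.inr ⟨x, ⟨hx, hxW⟩, rfl⟩, hj x hx⟩

lemma sorg_sigma_countable (A : Set ℝ)
    (h : @IsLindelofSigma A (@instTopologicalSpaceSubtype ℝ (· ∈ A) sorgenfreyTopology)) :
    A.Countable := by
  obtain ⟨Y, tY, Z, tZ, hZ, ⟨f, hf, hfs⟩, ⟨g, ⟨-, hgc, hgk⟩, -⟩⟩ := h
  have hF : @Continuous Y ℝ tY sorgenfreyTopology (fun y => (f y : ℝ)) :=
    @Continuous.comp Y A ℝ tY (@instTopologicalSpaceSubtype ℝ (· ∈ A) sorgenfreyTopology)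
      sorgenfreyTopology _ _ (@continuous_subtype_val ℝ sorgenfreyTopology (· ∈ A)) hf
  have key : ∀ x : A, ∃ p : (countableBasis Z) × ℚ, ((p.2 : ℝ) < x) ∧
      (∃ y, g y ∈ p.1.1 ∧ f y = x) ∧
      ∀ y, g y ∈ p.1.1 → (f y : ℝ) < p.2 ∨ (x : ℝ) ≤ f y := by
    intro x
    obtain ⟨y0, hy0⟩ := hfs x
    let V : {q : ℚ // (q : ℝ) < x} → Set ℝ := fun q => Iio (q.1 : ℝ) ∪ Ici (x : ℝ)
    have hV : ∀ q, IsOpen[sorgenfreyTopology] (V q) := by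
      intro q
      refine sorg_isOpen_of fun t ht => ?_
      rcases ht with ht | ht
      · exact ⟨q.1, ht, fun u hu => Or.inl hu.2⟩
      · exact ⟨t + 1, by linarith, fun u hu => Or.inr (le_trans ht hu.1)⟩
    have hO : ∀ q, IsOpen ((fun y => (f y : ℝ)) ⁻¹' V q) := fun q =>
      (@continuous_def Y ℝ tY sorgenfreyTopology _).1 hF _ (hV q)
    obtain ⟨q00, hq00⟩ := exists_rat_lt (x : ℝ)
    haveI : Nonempty {q : ℚ // (q : ℝ) < x} := ⟨⟨q00, hq00⟩⟩
    obtain ⟨q, hq⟩ := (hgk (g y0)).elim_directed_cover _ hO (by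
      intro y _
      rcases lt_or_ge (f y : ℝ) x with h | h
      · obtain ⟨q, h1, h2⟩ := exists_rat_btwn h
        exact mem_iUnion.2 ⟨⟨q, h2⟩, Or.inl h1⟩
      · exact mem_iUnion.2 ⟨⟨q00, hq00⟩, Or.inr h⟩) (by
      have hm : Monotone (fun q => (fun y => (f y : ℝ)) ⁻¹' V q) := by
        intro a b hab y hy
        rcases hy with hy | hy
        · have : (a.1 : ℝ) ≤ b.1 := by exact_mod_cast hab
          exact Or.inl (lt_of_lt_of_le hy this)
        · exact Or.inr hy
      exact hm.directed_le)
    have hC := hgc _ (hO q).isClosed_compl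
    have hz : g y0 ∈ (g '' ((fun y => (f y : ℝ)) ⁻¹' V q)ᶜ)ᶜ := by
      rintro ⟨y, hy, hyg⟩
      exact hy (hq hyg)
    obtain ⟨B, hB, hzB, hBs⟩ := (isBasis_countableBasis Z).exists_subset_of_mem_open hz
      hC.isOpen_compl
    refine ⟨(⟨B, hB⟩, q.1), q.2, ⟨y0, hzB, hy0⟩, fun y hy => ?_⟩
    by_contra hcon
    exact hBs hy ⟨y, hcon, rfl⟩
  choose p hp1 hp2 hp3 using key
  haveI : Countable (countableBasis Z) := (countable_countableBasis Z).to_subtype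
  have hlt : ∀ a b : A, p a = p b → ¬ (a : ℝ) < b := by
    intro a b hab hl
    obtain ⟨y, hy, hya⟩ := hp2 a
    have h1 := hp1 a
    rw [hab] at hy h1
    rcases hp3 b y hy with h | h
    · rw [hya] at h; linarith
    · rw [hya] at h; linarith
  have hinj : Injective p := fun a b hab =>
    Subtype.ext (le_antisymm (not_lt.1 (hlt b a hab.symm)) (not_lt.1 (hlt a b hab)))
  exact hinj.countable

/-- The Sorgenfrey line is hereditarily Lindelöf but not a charming space. -/
theorem sorgenfrey_hereditarily_lindelof_not_charming :
    (∀ s : Set ℝ, @IsLindelof ℝ sorgenfreyTopology s) ∧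
    ¬ @IsCharming ℝ sorgenfreyTopology := by
  refine ⟨sorg_lindelof, ?_⟩
  rintro ⟨Y, hY, h⟩
  have hYc := sorg_sigma_countable Y hY
  obtain ⟨U, hYU, hUo, hU⟩ := Y.exists_isOpen_lt_of_lt (μ := MeasureTheory.volume) 1
    (by rw [hYc.measure_zero]; exact one_pos)
  have hc := sorg_sigma_countable _ (h U (sorg_isOpen_of_isOpen hUo) hYU)
  have h1 := MeasureTheory.measure_union_le (μ := MeasureTheory.volume) U Uᶜ
  rw [union_compl_self, hc.measure_zero, Real.volume_univ, add_zero] at h1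
  exact absurd (h1.trans_lt hU) (by simp)
end

section
/- Every charming space X whose diagonal {(x,x) : x ∈ X} is a Gδ-subset of X × X is (2,2)-structured: there exists a subset Y of X such that Y with the subspace topology has a countable network, and for every open set U of X with Y ⊆ U, the set X \ U with the subspace topology has a countable network. -/
open Set Function TopologicalSpace

universe u

/-- The total space of a perfect map onto a second-countable space is Lindelof. -/
theorem lindelof_of_proper {Y Z : Type*} [TopologicalSpace Y] [TopologicalSpace Z]
    [SecondCountableTopology Z] (g : Y → Z) (hg : IsProperMap g) : IsLindelof (univ : Set Y) := by
  obtain ⟨-, hcl, hK⟩ := isProperMap_iff_isClosedMap_and_compact_fibers.1 hg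
  refine isLindelof_of_countable_subcover ?_
  intro ι U hU hcov
  have h1 : ∀ z : Z, ∃ t : Finset ι, g ⁻¹' {z} ⊆ ⋃ i ∈ t, U i := fun z =>
    (hK z).elim_finite_subcover U hU ((subset_univ _).trans hcov)
  choose t ht using h1
  have hN : ∀ z : Z, IsOpen (kernImage g (⋃ i ∈ t z, U i)) := fun z =>
    isClosedMap_iff_kernImage.1 hcl (isOpen_biUnion fun i _ => hU i)
  obtain ⟨r, hr, hrc⟩ := (isLindelof_univ (X := Z)).elim_countable_subcover _ hN (by
    intro z _
    exact mem_iUnion.2 ⟨z, fun y hy => ht z hy⟩)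
  refine ⟨⋃ z ∈ r, (t z : Set ι), hr.biUnion fun z _ => (t z).countable_toSet, ?_⟩
  intro y _
  obtain ⟨z, hz, hyz⟩ := mem_iUnion₂.1 (hrc (mem_univ (g y)))
  obtain ⟨i, hi, hyi⟩ := mem_iUnion₂.1 (hyz rfl)
  exact mem_iUnion₂.2 ⟨i, mem_iUnion₂.2 ⟨z, hz, hi⟩, hyi⟩

/-- A Lindelof Sigma-space with a Gdelta diagonal has a countable network. -/
theorem network_of_lindelofSigma {X : Type u} [TopologicalSpace X] [T2Space X]
    (hX : IsLindelofSigma X) (hdiag : IsGδ (Set.diagonal X)) : HasCountableNetwork X := by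
  obtain ⟨Y, tY, Z, tZ, hZ, ⟨f, hf, hfs⟩, g, hg, -⟩ := hX
  have hgp : IsProperMap g := isProperMap_iff_isClosedMap_and_compact_fibers.2 hg
  obtain ⟨-, hcl, hK⟩ := hg
  have hL : IsLindelof (univ : Set (X × X)) := by
    have := (lindelof_of_proper _ (hgp.prodMap hgp)).image (hf.prodMap hf)
    rwa [image_univ_of_surjective (hfs.prodMap hfs)] at this
  obtain ⟨W, hW, hWd⟩ := isGδ_iff_eq_iInter_nat.1 hdiag
  have hoff : IsLindelof ((diagonal X)ᶜ) := by
    rw [hWd, compl_iInter]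
    exact isLindelof_iUnion fun n => hL.of_isClosed_subset (hW n).isClosed_compl (subset_univ _)
  have hsep : ∀ p : {p : X × X // p.1 ≠ p.2}, ∃ A B : Set X, IsOpen A ∧ IsOpen B ∧
      p.1.1 ∈ A ∧ p.1.2 ∈ B ∧ Disjoint A B := fun p => t2_separation p.2
  choose A B hA hB hpA hpB hAB using hsep
  obtain ⟨r, hr, hrc⟩ := hoff.elim_countable_subcover (fun p => A p ×ˢ B p)
    (fun p => (hA p).prod (hB p)) (by
      rintro ⟨x, y⟩ hp
      exact mem_iUnion.2 ⟨⟨(x, y), hp⟩, hpA ⟨(x, y), hp⟩, hpB ⟨(x, y), hp⟩⟩)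
  have hsep2 : ∀ x y : X, x ≠ y → ∃ p : r, y ∈ B p ∧ x ∉ B p := by
    intro x y hxy
    obtain ⟨p, hp, h1, h2⟩ := mem_iUnion₂.1 (hrc (show (x, y) ∈ (diagonal X)ᶜ from hxy))
    exact ⟨⟨p, hp⟩, h2, fun h => disjoint_left.1 (hAB p) h1 h⟩
  have : Countable r := hr.to_subtype
  have : Countable (countableBasis Z) := (countable_countableBasis Z).to_subtype
  refine ⟨range fun q : Finset r × countableBasis Z =>
    (f '' (g ⁻¹' (q.2 : Set Z))) \ ⋃ p ∈ q.1, B p, countable_range _, ?_⟩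
  intro x V hV hxV
  obtain ⟨y, rfl⟩ := hfs x
  have hKc : IsCompact (f '' (g ⁻¹' {g y}) \ V) := ((hK (g y)).image hf).diff hV
  obtain ⟨t, ht⟩ := hKc.elim_finite_subcover
    (fun p : {p : r // f y ∉ B p} => B p.1) (fun p => hB _) (by
      rintro w ⟨-, hw⟩
      obtain ⟨p, h1, h2⟩ := hsep2 (f y) w (fun h => hw (h ▸ hxV))
      exact mem_iUnion.2 ⟨⟨p, h2⟩, h1⟩)
  classical
  set s : Finset r := t.image Subtype.val with hs
  have hO : IsOpen (V ∪ ⋃ p ∈ s, B p) := hV.union (isOpen_biUnion fun p _ => hB _)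
  have hker : IsOpen (kernImage g (f ⁻¹' (V ∪ ⋃ p ∈ s, B p))) :=
    isClosedMap_iff_kernImage.1 hcl (hO.preimage hf)
  have hmem : g y ∈ kernImage g (f ⁻¹' (V ∪ ⋃ p ∈ s, B p)) := by
    intro y' hy'
    by_cases h : f y' ∈ V
    · exact Or.inl h
    · obtain ⟨p, hp, hyp⟩ := mem_iUnion₂.1 (ht ⟨mem_image_of_mem f hy', h⟩)
      exact Or.inr (mem_iUnion₂.2 ⟨p.1, Finset.mem_image_of_mem _ hp, hyp⟩)
  obtain ⟨b, hb, hyb, hbs⟩ := (isBasis_countableBasis Z).exists_subset_of_mem_open hmem hker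
  refine ⟨_, ⟨(s, ⟨b, hb⟩), rfl⟩, ⟨mem_image_of_mem f hyb, ?_⟩, ?_⟩
  · intro h
    obtain ⟨p, hp, hyp⟩ := mem_iUnion₂.1 h
    obtain ⟨p', -, rfl⟩ := Finset.mem_image.1 hp
    exact p'.2 hyp
  · rintro _ ⟨⟨y', hy', rfl⟩, hn⟩
    exact (hbs hy' rfl).resolve_right hn

theorem diag_subtype {X : Type u} [TopologicalSpace X] (hdiag : IsGδ (Set.diagonal X))
    (S : Set X) : IsGδ (Set.diagonal S) := by
  have := hdiag.preimage (f := Prod.map (Subtype.val : S → X) (Subtype.val : S → X))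
    (continuous_subtype_val.prodMap continuous_subtype_val)
  convert this using 1
  ext ⟨a, b⟩
  simp [Subtype.ext_iff]

/-- A charming space with a `Gδ`-diagonal is `(2,2)`-structured. -/
theorem charming_gdelta_diagonal_is_22_structured {X : Type u} [TopologicalSpace X]
    [T35Space X] (hX : IsCharming X) (hdiag : IsGδ (Set.diagonal X)) :
    ∃ Y : Set X, HasCountableNetwork Y ∧
      ∀ U : Set X, IsOpen U → Y ⊆ U → HasCountableNetwork ↥(Uᶜ) := by
  obtain ⟨Y, hY, hU⟩ := hX
  exact ⟨Y, network_of_lindelofSigma hY (diag_subtype hdiag Y), fun U hUo hYU =>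
    network_of_lindelofSigma (hU U hUo hYU) (diag_subtype hdiag _)⟩
end

section
/- There exists a topological space which is CL-charming but not CO-charming; specifically, the topological sum (disjoint union) of countably infinitely many copies of the one-point Lindelöfication of an uncountable discrete space is CL-charming but not CO-charming. -/
open Set Function TopologicalSpace

universe u

/-- Every countable space is Lindelöf Σ. -/
theorem isLindelofSigma_of_countable (X : Type u) [TopologicalSpace X] [Countable X] :
    IsLindelofSigma X := by
  let t : TopologicalSpace X := ⊥
  have : DiscreteTopology X := ⟨rfl⟩
  refine ⟨X, ⊥, X, ⊥, inferInstance, ⟨id, continuous_bot, surjective_id⟩,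
    ⟨id, ⟨continuous_id, IsClosedMap.id, fun z => ?_⟩, surjective_id⟩⟩
  exact isCompact_singleton

/-- If all countable sets are closed, then compact sets are finite. -/
theorem finite_of_isCompact_of_countable_closed {X : Type*} [TopologicalSpace X]
    (h : ∀ C : Set X, C.Countable → IsClosed C) {K : Set X} (hK : IsCompact K) : K.Finite := by
  by_contra hinf
  obtain ⟨C, hCK, hCinf, hCc⟩ : ∃ C ⊆ K, C.Infinite ∧ C.Countable := by
    let e := Set.Infinite.natEmbedding K hinf
    refine ⟨range (fun n => (e n : X)), ?_, ?_, countable_range _⟩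
    · rintro _ ⟨n, rfl⟩
      exact (e n).2
    · exact infinite_range_of_injective (Subtype.val_injective.comp e.injective)
  have hCcomp : IsCompact C := hK.of_isClosed_subset (h C hCc) hCK
  have : DiscreteTopology C := by
    rw [discreteTopology_iff_forall_isClosed]
    intro s
    have : IsClosed (Subtype.val '' s : Set X) :=
      h _ (hCc.mono (by rintro _ ⟨x, _, rfl⟩; exact x.2))
    have h2 := this.preimage (continuous_subtype_val (p := (· ∈ C)))
    rwa [preimage_image_eq _ Subtype.val_injective] at h2
  exact hCinf (hCcomp.finite (isDiscrete_iff_discreteTopology.2 this))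

/-- If all countable sets are closed in a Lindelöf Σ-space, then it is countable. -/
theorem countable_of_isLindelofSigma {X : Type u} [TopologicalSpace X]
    (h : ∀ C : Set X, C.Countable → IsClosed C) (hX : IsLindelofSigma X) : Countable X := by
  obtain ⟨Y, tY, Z, tZ, hZ, ⟨f, hf, hfs⟩, ⟨g, ⟨hg, hgc, hgk⟩, hgs⟩⟩ := hX
  have key : ∀ z : Z, ∃ B ∈ countableBasis Z, z ∈ B ∧ (f '' (g ⁻¹' B)).Finite := by
    intro z
    have hfin : (f '' (g ⁻¹' {z})).Finite :=
      finite_of_isCompact_of_countable_closed h ((hgk z).image hf)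
    by_contra! hcon
    have hne : ∀ B : countableBasis Z, z ∈ B.1 →
        ∃ x, x ∈ f '' (g ⁻¹' B.1) ∧ x ∉ f '' (g ⁻¹' {z}) := by
      intro B hB
      by_contra! hc
      exact hcon B.1 B.2 hB (hfin.subset hc)
    choose x hx hx' using hne
    have : Countable (countableBasis Z) := (countable_countableBasis Z).to_subtype
    let C : Set X := range fun q : {B : countableBasis Z // z ∈ B.1} => x q.1 q.2
    have hC : IsClosed C := h C (countable_range _)
    -- the image of the closed preimage of `C` is closed in `Z` and misses `z`
    have hD : IsClosed (g '' (f ⁻¹' C)) := hgc _ (hC.preimage hf)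
    have hz : z ∈ (g '' (f ⁻¹' C))ᶜ := by
      rintro ⟨y, ⟨⟨B, hB⟩, hBy⟩, rfl⟩
      exact hx' B hB ⟨y, rfl, hBy.symm⟩
    obtain ⟨B, hB, hzB, hBs⟩ :=
      (isBasis_countableBasis Z).exists_subset_of_mem_open hz hD.isOpen_compl
    obtain ⟨y, hy, hyx⟩ := hx ⟨B, hB⟩ hzB
    exact hBs hy ⟨y, ⟨⟨⟨B, hB⟩, hzB⟩, hyx.symm⟩, rfl⟩
  have hcount : (⋃ B ∈ {B ∈ countableBasis Z | (f '' (g ⁻¹' B)).Finite},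
      f '' (g ⁻¹' B)).Countable :=
    ((countable_countableBasis Z).mono (sep_subset _ _)).biUnion fun B hB => hB.2.countable
  rw [← countable_univ_iff]
  refine hcount.mono fun a _ => ?_
  obtain ⟨y, rfl⟩ := hfs a
  obtain ⟨B, hB, hzB, hfin⟩ := key (g y)
  exact mem_biUnion (show B ∈ {B ∈ countableBasis Z | (f '' (g ⁻¹' B)).Finite} from ⟨hB, hfin⟩)
    ⟨y, hzB, rfl⟩

/-- The topological sum of countably many copies of the one-point Lindelöfication of an
uncountable discrete space is CL-charming but not CO-charming. -/
theorem sum_of_lindelofications_CL_not_CO {X : Type u} [TopologicalSpace X] (p : X)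
    (hopen : ∀ U : Set X, IsOpen U ↔ (p ∈ U → (Uᶜ : Set X).Countable))
    (huncountable : ¬ (({p}ᶜ : Set X)).Countable) :
    IsCLCharming (Σ _ : ℕ, X) ∧ ¬ IsCOCharming (Σ _ : ℕ, X) := by
  have hclX : ∀ C : Set X, C.Countable → IsClosed C := by
    intro C hC
    rw [← isOpen_compl_iff, hopen, compl_compl]
    exact fun _ => hC
  have hcl : ∀ C : Set (Σ _ : ℕ, X), C.Countable → IsClosed C := by
    intro C hC
    rw [isClosed_sigma_iff]
    exact fun i => hclX _ (hC.preimage sigma_mk_injective)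
  constructor
  · have hc : (range fun n : ℕ => (⟨n, p⟩ : Σ _ : ℕ, X)).Countable := countable_range _
    refine ⟨_, hcl _ hc, ?_, ?_⟩
    · have := hc.to_subtype
      exact isLindelofSigma_of_countable _
    · intro U hU hYU
      have hUc : (Uᶜ).Countable := by
        have : (⋃ i : ℕ, Sigma.mk i '' (Sigma.mk i ⁻¹' U)ᶜ).Countable :=
          countable_iUnion fun i =>
            ((hopen _).1 (isOpen_sigma_iff.1 hU i) (hYU ⟨i, rfl⟩)).image _
        refine this.mono ?_
        rintro ⟨i, x⟩ hx
        exact mem_iUnion.2 ⟨i, x, hx, rfl⟩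
      have := hUc.to_subtype
      exact isLindelofSigma_of_countable _
  · rintro ⟨Y, hY, -, hYU⟩
    have hfin := finite_of_isCompact_of_countable_closed hcl hY
    obtain ⟨i, hi⟩ := (hfin.image Sigma.fst).exists_notMem
    have hS := hYU (range (fun x : X => (⟨i, x⟩ : Σ _ : ℕ, X)))ᶜ (Topology.IsClosedEmbedding.sigmaMk.isClosed_range.isOpen_compl)
      (by rintro y hy ⟨x, rfl⟩; exact hi ⟨_, hy, rfl⟩)
    rw [compl_compl] at hS
    have hcount := countable_of_isLindelofSigma (fun C hC => by
      have h2 := (hcl _ (hC.image Subtype.val)).preimage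
        (continuous_subtype_val (p := (· ∈ range (fun x : X => (⟨i, x⟩ : Σ _ : ℕ, X)))))
      rwa [preimage_image_eq _ Subtype.val_injective] at h2) hS
    have hr : (range (fun x : X => (⟨i, x⟩ : Σ _ : ℕ, X))).Countable := hcount
    have h3 : ((fun x : X => (⟨i, x⟩ : Σ _ : ℕ, X)) ⁻¹'
        (range (fun x : X => (⟨i, x⟩ : Σ _ : ℕ, X)))).Countable :=
      hr.preimage (fun a b hab => by simpa using hab)
    refine huncountable (Set.Countable.mono ?_ h3)
    intro x _
    exact ⟨x, rfl⟩
end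

section
/- The image of a CL-charming space under a closed continuous map is CL-charming: if X is a CL-charming space, Z is a topological space, and f : X → Z is a continuous, closed surjection, then Z is CL-charming. -/
open Set Function TopologicalSpace

universe u

theorem IsLindelofSigma.image_aux {A B : Type u} [TopologicalSpace A] [TopologicalSpace B]
    (h : IsLindelofSigma A) (p : A → B) (hp : Continuous p) (hs : Surjective p) :
    IsLindelofSigma B := by
  obtain ⟨Y, tY, M, tM, hM, ⟨q, hq, hqs⟩, hg⟩ := h
  exact ⟨Y, tY, M, tM, hM, ⟨p ∘ q, hp.comp hq, hs.comp hqs⟩, hg⟩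

/-- The image of a CL-charming space under a closed continuous surjection is CL-charming. -/
theorem closed_image_of_CLCharming {X : Type u} {Z : Type u}
    [TopologicalSpace X] [T35Space X] [TopologicalSpace Z] [T35Space Z]
    (hX : IsCLCharming X) (f : X → Z) (hf : Continuous f) (hclosed : IsClosedMap f)
    (hsurj : Surjective f) :
    IsCLCharming Z := by
  obtain ⟨Y, hY, hYL, hU⟩ := hX
  refine ⟨f '' Y, hclosed Y hY, ?_, fun U hUo hYU => ?_⟩
  · refine hYL.image_aux (fun y => ⟨f y.1, mem_image_of_mem f y.2⟩) (by fun_prop) ?_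
    rintro ⟨_, y, hy, rfl⟩
    exact ⟨⟨y, hy⟩, rfl⟩
  · have h := hU (f ⁻¹' U) (hUo.preimage hf) (image_subset_iff.mp hYU)
    refine h.image_aux (fun x => ⟨f x.1, x.2⟩) (by fun_prop) ?_
    rintro ⟨z, hz⟩
    obtain ⟨x, rfl⟩ := hsurj z
    exact ⟨⟨x, hz⟩, rfl⟩
end

section
/- The preimage of a CL-charming (resp. CO-charming) space under a perfect map is CL-charming (resp. CO-charming): if f : X → Z is a perfect surjection between topological spaces and Z is CL-charming, then X is CL-charming; and if Z is CO-charming, then X is CO-charming. -/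
open Set Function TopologicalSpace

universe u

/-- Perfect maps are proper maps. -/
lemma PerfectMap.isProperMap {Y Z : Type*} [TopologicalSpace Y] [TopologicalSpace Z]
    {f : Y → Z} (hf : PerfectMap f) : IsProperMap f :=
  isProperMap_iff_isClosedMap_and_compact_fibers.2 hf

/-- A proper preimage of a Lindelöf Σ-space is a Lindelöf Σ-space (pull back the witness). -/
lemma IsLindelofSigma.of_proper {A B : Type u} [TopologicalSpace A] [TopologicalSpace B]
    {f : A → B} (hf : IsProperMap f) (hs : Surjective f) (hB : IsLindelofSigma B) :
    IsLindelofSigma A := by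
  obtain ⟨Y, tY, M, tM, hM, ⟨p, hp, hps⟩, ⟨g, hg, hgs⟩⟩ := hB
  let G : Set (B × Y) := {q | q.1 = p q.2}
  let F : A × Y → B × Y := Prod.map f id
  have hF : IsProperMap F := hf.prodMap isProperMap_id
  let e : G ≃ₜ Y :=
    { toFun := fun q => q.1.2
      invFun := fun y => ⟨(p y, y), rfl⟩
      left_inv := by
        rintro ⟨⟨b, y⟩, h⟩
        have h' : b = p y := h
        subst h'
        rfl
      right_inv := fun y => rfl
      continuous_toFun := by fun_prop
      continuous_invFun := by fun_prop }
  have hP : IsProperMap (g ∘ e ∘ G.restrictPreimage F) :=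
    hg.isProperMap.comp (e.isProperMap.comp (hF.restrictPreimage G))
  refine ⟨F ⁻¹' G, inferInstance, M, tM, hM, ⟨fun q => q.1.1, by fun_prop, ?_⟩,
    ⟨_, isProperMap_iff_isClosedMap_and_compact_fibers.1 hP, ?_⟩⟩
  · intro a
    obtain ⟨y, hy⟩ := hps (f a)
    exact ⟨⟨(a, y), hy.symm⟩, rfl⟩
  · intro m
    obtain ⟨y, rfl⟩ := hgs m
    obtain ⟨a, ha⟩ := hs (p y)
    exact ⟨⟨(a, y), ha⟩, rfl⟩

/-- The complement condition lifts along a perfect map. -/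
lemma lindelofSigma_compl_of_perfect {X Z : Type u} [TopologicalSpace X] [TopologicalSpace Z]
    {f : X → Z} (hf : PerfectMap f) {S : Set Z}
    (hS : ∀ U : Set Z, IsOpen U → S ⊆ U → IsLindelofSigma ↥(Uᶜ))
    (U : Set X) (hU : IsOpen U) (hSU : f ⁻¹' S ⊆ U) : IsLindelofSigma ↥(Uᶜ) := by
  have hcl : IsClosed (f '' Uᶜ) := hf.2.1 _ hU.isClosed_compl
  have h := hS (f '' Uᶜ)ᶜ hcl.isOpen_compl (by
    rintro z hz ⟨x, hx, rfl⟩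
    exact hx (hSU hz))
  rw [compl_compl] at h
  let r : ↥(Uᶜ) → ↥(f '' Uᶜ) := fun x => ⟨f x.1, x.1, x.2, rfl⟩
  have hr : Continuous r := (hf.1.comp continuous_subtype_val).subtype_mk _
  have hpr : IsProperMap r :=
    isProperMap_of_comp_of_inj hr continuous_subtype_val
      (hf.isProperMap.restrict hU.isClosed_compl) Subtype.val_injective
  refine h.of_proper hpr ?_
  rintro ⟨_, x, hx, rfl⟩
  exact ⟨⟨x, hx⟩, rfl⟩

/-- The preimage of a CL-charming (resp. CO-charming) space under a perfect surjection is
CL-charming (resp. CO-charming). -/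
theorem perfect_preimage_of_CL_and_CO_charming {X : Type u} {Z : Type u}
    [TopologicalSpace X] [T35Space X] [TopologicalSpace Z] [T35Space Z]
    (f : X → Z) (hf : PerfectMap f) (hsurj : Surjective f) :
    (IsCLCharming Z → IsCLCharming X) ∧ (IsCOCharming Z → IsCOCharming X) := by
  have key : ∀ S : Set Z, IsLindelofSigma S → IsLindelofSigma ↥(f ⁻¹' S) := fun S hS =>
    hS.of_proper (hf.isProperMap.restrictPreimage S) (hsurj.restrictPreimage S)
  constructor
  · rintro ⟨S, hc, hS, h⟩
    exact ⟨f ⁻¹' S, hc.preimage hf.1, key S hS, lindelofSigma_compl_of_perfect hf h⟩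
  · rintro ⟨S, hc, hS, h⟩
    exact ⟨f ⁻¹' S, hf.isProperMap.isCompact_preimage hc, key S hS,
      lindelofSigma_compl_of_perfect hf h⟩
end

section
/- Every CO-charming space with a point-countable base is metrizable: if X is a CO-charming topological space possessing a base ℬ for its topology such that every point of X belongs to at most countably many members of ℬ, then X is metrizable. -/
open Set Function TopologicalSpace

universe u

/-- Image of a Lindelöf Σ-type resolution in a T1 space with a point-countable base is separable. -/
theorem aux_sep {X : Type u} [TopologicalSpace X] [T1Space X] (B : Set (Set X))
    (hBopen : ∀ b ∈ B, IsOpen b)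
    (hBbase : ∀ x : X, ∀ U : Set X, IsOpen U → x ∈ U → ∃ b ∈ B, x ∈ b ∧ b ⊆ U)
    (hBpc : ∀ x : X, {b ∈ B | x ∈ b}.Countable)
    {Y Z : Type u} [TopologicalSpace Y] [TopologicalSpace Z] [SecondCountableTopology Z]
    (f : Y → X) (hf : Continuous f) (g : Y → Z) (hg : PerfectMap g) :
    ∃ D : Set X, D.Countable ∧ range f ⊆ closure D := by
  classical
  obtain ⟨hgc, hgcl, hgk⟩ := hg
  have hP : ∀ (w : Set Z) (F : Set (Set X)), ∃ P : Set X, P.Countable ∧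
      ((f '' (g ⁻¹' w) \ ⋃₀ F).Nonempty → (P ∩ (f '' (g ⁻¹' w) \ ⋃₀ F)).Nonempty) := by
    intro w F
    by_cases h : (f '' (g ⁻¹' w) \ ⋃₀ F).Nonempty
    · obtain ⟨p, hp⟩ := h
      exact ⟨{p}, countable_singleton p, fun _ => ⟨p, rfl, hp⟩⟩
    · exact ⟨∅, countable_empty, fun h' => absurd h' h⟩
  choose P hPc hPne using hP
  let BD : Set X → Set (Set X) := fun D => ⋃ x ∈ D, {b ∈ B | x ∈ b}
  have hBDc : ∀ D : Set X, D.Countable → (BD D).Countable := fun D hD =>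
    hD.biUnion fun x _ => hBpc x
  let step : Set X → Set X := fun D =>
    D ∪ ⋃ w ∈ countableBasis Z, ⋃ F ∈ {F : Set (Set X) | F.Finite ∧ F ⊆ BD D}, P w F
  have hstepc : ∀ D : Set X, D.Countable → (step D).Countable := fun D hD =>
    hD.union ((countable_countableBasis Z).biUnion fun w _ =>
      (countable_setOf_finite_subset (hBDc D hD)).biUnion fun F _ => hPc w F)
  let E : ℕ → Set X := fun n => step^[n] ∅
  have hEs : ∀ n, E (n + 1) = step (E n) := fun n => iterate_succ_apply' step n ∅
  have hEc : ∀ n, (E n).Countable := by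
    intro n
    induction n with
    | zero => exact countable_empty
    | succ n ih => rw [hEs]; exact hstepc _ ih
  have hEm : Monotone E := monotone_nat_of_le_succ fun n => by
    rw [hEs]; exact subset_union_left
  refine ⟨⋃ n, E n, countable_iUnion hEc, ?_⟩
  set D := ⋃ n, E n with hD
  -- closure property
  have hclose : ∀ w ∈ countableBasis Z, ∀ F : Set (Set X), F.Finite → F ⊆ BD D →
      (f '' (g ⁻¹' w) \ ⋃₀ F).Nonempty → (D ∩ (f '' (g ⁻¹' w) \ ⋃₀ F)).Nonempty := by
    intro w hw F hF hFD hne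
    have hk : ∃ k, F ⊆ BD (E k) := by
      clear hne
      induction F, hF using Set.Finite.induction_on with
      | empty => exact ⟨0, empty_subset _⟩
      | @insert b F _ _ ih =>
        obtain ⟨k, hk⟩ := ih ((subset_insert _ _).trans hFD)
        have hb := hFD (mem_insert _ _)
        simp only [BD, hD, mem_iUnion] at hb
        obtain ⟨x, ⟨m, hm⟩, hx⟩ := hb
        refine ⟨max k m, insert_subset ?_ (hk.trans ?_)⟩
        · exact mem_biUnion (hEm (le_max_right k m) hm) hx
        · exact biUnion_subset_biUnion_left (hEm (le_max_left k m))
    obtain ⟨k, hk⟩ := hk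
    obtain ⟨p, hp, hp'⟩ := hPne w F hne
    refine ⟨p, mem_iUnion.2 ⟨k + 1, ?_⟩, hp'⟩
    rw [hEs]
    exact Or.inr (mem_biUnion hw (mem_biUnion (show F ∈ {F : Set (Set X) | _} from ⟨hF, hk⟩) hp))
  rintro _ ⟨y, rfl⟩
  by_contra hx
  have hK : IsCompact (f '' (g ⁻¹' {g y}) ∩ closure D) :=
    ((hgk (g y)).image hf).inter_right isClosed_closure
  have hb : ∀ q : X, q ∈ closure D → ∃ b ∈ B, q ∈ b ∧ b ⊆ {f y}ᶜ := fun q hq =>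
    hBbase q _ isOpen_compl_singleton (by
      rintro rfl
      exact hx hq)
  have hb' : ∀ q : X, ∃ b : Set X, q ∈ closure D → b ∈ B ∧ q ∈ b ∧ b ⊆ {f y}ᶜ := fun q => by
    by_cases hq : q ∈ closure D
    · obtain ⟨b, h⟩ := hb q hq
      exact ⟨b, fun _ => h⟩
    · exact ⟨∅, fun h => absurd h hq⟩
  choose c hc using hb'
  obtain ⟨t, htK, ht⟩ := hK.elim_nhds_subcover c fun q hq =>
    (hBopen _ (hc q hq.2).1).mem_nhds (hc q hq.2).2.1
  set F : Set (Set X) := c '' (t : Set X) with hFdef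
  have hFfin : F.Finite := t.finite_toSet.image c
  have hFD : F ⊆ BD D := by
    rintro _ ⟨q, hq, rfl⟩
    obtain ⟨h1, h2, h3⟩ := hc q (htK q hq).2
    obtain ⟨d, hd, hdD⟩ := mem_closure_iff.1 (htK q hq).2 _ (hBopen _ h1) h2
    exact mem_biUnion hdD ⟨h1, hd⟩
  have hFy : f y ∉ ⋃₀ F := by
    rintro ⟨_, ⟨q, hq, rfl⟩, hy⟩
    exact (hc q (htK q hq).2).2.2 hy rfl
  have hFo : IsOpen (⋃₀ F) := isOpen_sUnion (by
    rintro _ ⟨q, hq, rfl⟩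
    exact hBopen _ (hc q (htK q hq).2).1)
  set V : Set X := ⋃₀ F ∪ (closure D)ᶜ with hV
  have hVo : IsOpen V := hFo.union isClosed_closure.isOpen_compl
  have hKV : ∀ y', g y' = g y → f y' ∈ V := by
    intro y' hy'
    by_cases h : f y' ∈ closure D
    · left
      have := ht ⟨mem_image_of_mem f hy', h⟩
      simp only [mem_iUnion] at this
      obtain ⟨q, hq, h'⟩ := this
      exact ⟨_, ⟨q, hq, rfl⟩, h'⟩
    · exact Or.inr h
  have hWo : IsOpen (g '' (f ⁻¹' V)ᶜ)ᶜ := (hgcl _ (hVo.preimage hf).isClosed_compl).isOpen_compl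
  have hzW : g y ∈ (g '' (f ⁻¹' V)ᶜ)ᶜ := by
    rintro ⟨y', h1, h2⟩
    exact h1 (hKV y' h2)
  obtain ⟨w, hw, hzw, hwW⟩ := (isBasis_countableBasis Z).exists_subset_of_mem_open hzW hWo
  obtain ⟨d, hdD, ⟨y', hy', rfl⟩, hdF⟩ :=
    hclose w hw F hFfin hFD ⟨f y, mem_image_of_mem f hzw, hFy⟩
  have hdV : f y' ∈ V := by
    by_contra h
    exact hwW hy' ⟨y', h, rfl⟩
  rcases hdV with h | h
  · exact hdF h
  · exact h (subset_closure hdD)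

theorem aux_sep_set {X : Type u} [TopologicalSpace X] [T1Space X] (B : Set (Set X))
    (hBopen : ∀ b ∈ B, IsOpen b)
    (hBbase : ∀ x : X, ∀ U : Set X, IsOpen U → x ∈ U → ∃ b ∈ B, x ∈ b ∧ b ⊆ U)
    (hBpc : ∀ x : X, {b ∈ B | x ∈ b}.Countable) (S : Set X) (hS : IsLindelofSigma S) :
    ∃ D : Set X, D.Countable ∧ S ⊆ closure D := by
  obtain ⟨Y, tY, Z, tZ, hZ, ⟨f, hf, hfs⟩, g, hg, -⟩ := hS
  obtain ⟨D, hD, h⟩ := aux_sep B hBopen hBbase hBpc (fun y => (f y : X))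
    (continuous_subtype_val.comp hf) g hg
  refine ⟨D, hD, fun x hx => h ?_⟩
  obtain ⟨y, hy⟩ := hfs ⟨x, hx⟩
  exact ⟨y, by simp [hy]⟩

/-- A CO-charming space with a point-countable base is metrizable. -/
theorem COCharming_point_countable_base_metrizable {X : Type u} [TopologicalSpace X]
    [T35Space X] (hX : IsCOCharming X) (B : Set (Set X))
    (hBopen : ∀ b ∈ B, IsOpen b)
    (hBbase : ∀ x : X, ∀ U : Set X, IsOpen U → x ∈ U → ∃ b ∈ B, x ∈ b ∧ b ⊆ U)
    (hBpc : ∀ x : X, {b ∈ B | x ∈ b}.Countable) :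
    TopologicalSpace.MetrizableSpace X := by
  classical
  obtain ⟨K, hK, hKS, hU⟩ := hX
  have key := aux_sep_set B hBopen hBbase hBpc
  have cnt : ∀ D : Set X, D.Countable → {b ∈ B | (b ∩ D).Nonempty}.Countable := by
    intro D hD
    refine (hD.biUnion fun x _ => hBpc x).mono ?_
    rintro b ⟨hb, x, hxb, hxD⟩
    exact mem_biUnion hxD ⟨hb, hxb⟩
  obtain ⟨D₀, hD₀, hKD⟩ := key K hKS
  have hBK : {b ∈ B | (b ∩ K).Nonempty}.Countable := by
    refine (cnt D₀ hD₀).mono ?_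
    rintro b ⟨hb, x, hxb, hxK⟩
    exact ⟨hb, mem_closure_iff.1 (hKD hxK) b (hBopen b hb) hxb⟩
  have hex : ∀ F : Set (Set X), ∃ D : Set X, D.Countable ∧
      (F ⊆ B → K ⊆ ⋃₀ F → (⋃₀ F)ᶜ ⊆ closure D) := by
    intro F
    by_cases h : F ⊆ B ∧ K ⊆ ⋃₀ F
    · obtain ⟨D, hD, h'⟩ := key _ (hU (⋃₀ F) (isOpen_sUnion fun b hb => hBopen b (h.1 hb)) h.2)
      exact ⟨D, hD, fun _ _ => h'⟩
    · exact ⟨∅, countable_empty, fun h1 h2 => absurd ⟨h1, h2⟩ h⟩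
  choose G hGc hG using hex
  let 𝓕 : Set (Set (Set X)) := {F | F.Finite ∧ F ⊆ {b ∈ B | (b ∩ K).Nonempty}}
  have h𝓕 : 𝓕.Countable := countable_setOf_finite_subset hBK
  set D : Set X := D₀ ∪ ⋃ F ∈ 𝓕, G F with hDdef
  have hDc : D.Countable := hD₀.union (h𝓕.biUnion fun F _ => hGc F)
  have hDd : ∀ x, x ∈ closure D := by
    intro x
    by_cases hx : x ∈ K
    · exact closure_mono subset_union_left (hKD hx)
    have hb' : ∀ q : X, ∃ b : Set X, q ∈ K → b ∈ B ∧ q ∈ b ∧ b ⊆ {x}ᶜ := fun q => by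
      by_cases hq : q ∈ K
      · obtain ⟨b, h⟩ := hBbase q {x}ᶜ isOpen_compl_singleton (by
          rintro rfl
          exact hx hq)
        exact ⟨b, fun _ => h⟩
      · exact ⟨∅, fun h => absurd h hq⟩
    choose c hc using hb'
    obtain ⟨t, htK, ht⟩ := hK.elim_nhds_subcover c fun q hq =>
      (hBopen _ (hc q hq).1).mem_nhds (hc q hq).2.1
    have hF : c '' (t : Set X) ∈ 𝓕 := by
      refine ⟨t.finite_toSet.image c, ?_⟩
      rintro _ ⟨q, hq, rfl⟩
      exact ⟨(hc q (htK q hq)).1, q, (hc q (htK q hq)).2.1, htK q hq⟩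
    have h1 : K ⊆ ⋃₀ (c '' (t : Set X)) := by
      intro q hq
      have := ht hq
      simp only [mem_iUnion] at this
      obtain ⟨r, hr, h'⟩ := this
      exact ⟨_, ⟨r, hr, rfl⟩, h'⟩
    have h2 : x ∈ (⋃₀ (c '' (t : Set X)))ᶜ := by
      rintro ⟨_, ⟨q, hq, rfl⟩, hy⟩
      exact (hc q (htK q hq)).2.2 hy rfl
    refine closure_mono ?_ (hG _ (fun b hb => (hF.2 hb).1) h1 h2)
    exact (subset_biUnion_of_mem (u := G) hF).trans subset_union_right
  have hbasis : IsTopologicalBasis {b ∈ B | (b ∩ D).Nonempty} := by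
    refine isTopologicalBasis_of_isOpen_of_nhds (fun b hb => hBopen b hb.1) ?_
    intro x U hxU hUo
    obtain ⟨b, hb, hxb, hbU⟩ := hBbase x U hUo hxU
    exact ⟨b, ⟨hb, mem_closure_iff.1 (hDd x) b (hBopen b hb) hxb⟩, hxb, hbU⟩
  have : SecondCountableTopology X := hbasis.secondCountableTopology (cnt D hDc)
  exact metrizableSpace_of_t3_secondCountable X
end

section
/- Every CO-charming space whose diagonal {(x,x) : x ∈ X} is a Gδ-subset of X × X has a countable network. -/
open Set Function TopologicalSpace

universe u

/-- `F` is a countable-type network of `A` modulo a compact cover. -/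
def NetMod {X : Type u} [TopologicalSpace X] (A : Set X) (F : Set (Set X)) : Prop :=
  ∀ a ∈ A, ∃ C : Set X, IsCompact C ∧ a ∈ C ∧
    ∀ U, IsOpen U → C ⊆ U → ∃ S ∈ F, C ⊆ S ∧ S ⊆ U

lemma IsLindelofSigma.netMod {X : Type u} [TopologicalSpace X] {A : Set X}
    (h : IsLindelofSigma A) : ∃ F : Set (Set X), F.Countable ∧ NetMod A F := by
  obtain ⟨Y, tY, Z, tZ, hZ, ⟨f, hf, hfs⟩, g, ⟨hg, hgc, hgk⟩, hgs⟩ := h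
  have hφ : Continuous (fun y => (f y : X)) := continuous_subtype_val.comp hf
  refine ⟨(fun B => (fun y => (f y : X)) '' (g ⁻¹' B)) '' countableBasis Z,
    (countable_countableBasis Z).image _, ?_⟩
  intro a ha
  obtain ⟨y, hy⟩ := hfs ⟨a, ha⟩
  refine ⟨(fun y => (f y : X)) '' (g ⁻¹' {g y}), (hgk _).image hφ, ⟨y, rfl, by simp [hy]⟩, ?_⟩
  intro U hU hCU
  have hO : IsOpen ((fun y => (f y : X)) ⁻¹' U) := hU.preimage hφ
  have hO' := (hgc _ hO.isClosed_compl).isOpen_compl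
  have hz : g y ∈ (g '' ((fun y => (f y : X)) ⁻¹' U)ᶜ)ᶜ := by
    rintro ⟨w, hw, hwy⟩
    exact hw (hCU ⟨w, hwy, rfl⟩)
  obtain ⟨B, hB, hzB, hBO⟩ := (isBasis_countableBasis Z).exists_subset_of_mem_open hz hO'
  refine ⟨_, ⟨B, hB, rfl⟩, image_mono ?_, ?_⟩
  · rintro w hw
    have : g w = g y := hw
    simpa [this] using hzB
  · rintro _ ⟨w, hw, rfl⟩
    by_contra hc
    exact hBO hw ⟨w, hc, rfl⟩

lemma NetMod.isLindelof {X : Type u} [TopologicalSpace X] {A : Set X} {F : Set (Set X)}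
    (hF : F.Countable) (h : NetMod A F) (ι : Type u) (U : ι → Set X) (hU : ∀ i, IsOpen (U i))
    (hcov : (⋃ i, U i) = univ) : ∃ t : Set ι, t.Countable ∧ A ⊆ ⋃ i ∈ t, U i := by
  classical
  let T : Set X → Set ι := fun S =>
    if hS : ∃ t : Finset ι, S ⊆ ⋃ i ∈ t, U i then (hS.choose : Set ι) else ∅
  refine ⟨⋃ S ∈ F, T S, hF.biUnion ?_, ?_⟩
  · intro S _
    by_cases hS : ∃ t : Finset ι, S ⊆ ⋃ i ∈ t, U i
    · simp only [T, dif_pos hS]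
      exact Finset.countable_toSet _
    · simp [T, dif_neg hS]
  · intro a ha
    obtain ⟨C, hC, haC, hCU⟩ := h a ha
    obtain ⟨t, ht⟩ := hC.elim_finite_subcover U hU (by rw [hcov]; exact subset_univ _)
    obtain ⟨S, hSF, hCS, hSU⟩ := hCU _ (isOpen_biUnion fun i _ => hU i) ht
    have hS : ∃ t : Finset ι, S ⊆ ⋃ i ∈ t, U i := ⟨t, hSU⟩
    have h1 := hS.choose_spec (hCS haC)
    simp only [mem_iUnion] at h1 ⊢
    obtain ⟨i, hi, hai⟩ := h1
    refine ⟨i, ⟨S, hSF, ?_⟩, hai⟩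
    simp only [T, dif_pos hS]
    exact hi

lemma cover_refine {X : Type u} [TopologicalSpace X] [T35Space X] {A : Set X}
    {F : Set (Set X)} (hF : F.Countable) (h : NetMod A F) (G : Set (X × X)) (hG : IsOpen G)
    (hd : diagonal X ⊆ G) :
    ∃ 𝒰 : Set (Set X), 𝒰.Countable ∧ A ⊆ ⋃₀ 𝒰 ∧
      ∀ U ∈ 𝒰, IsOpen U ∧ closure U ×ˢ closure U ⊆ G := by
  have key : ∀ x : X, ∃ U : Set X, IsOpen U ∧ x ∈ U ∧ closure U ×ˢ closure U ⊆ G := by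
    intro x
    have hx : (x, x) ∈ G := hd rfl
    obtain ⟨u, v, hu, hv, hxu, hxv, huv⟩ := isOpen_prod_iff.1 hG x x hx
    obtain ⟨t, ht, htc, htu⟩ := exists_mem_nhds_isClosed_subset
      ((hu.inter hv).mem_nhds ⟨hxu, hxv⟩)
    have hcl : closure (interior t) ⊆ u ∩ v :=
      (closure_minimal interior_subset htc).trans htu
    exact ⟨interior t, isOpen_interior, mem_interior_iff_mem_nhds.2 ht,
      (prod_mono (hcl.trans inter_subset_left) (hcl.trans inter_subset_right)).trans huv⟩
  choose U hUo hxU hUG using key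
  obtain ⟨t, ht, hAt⟩ := h.isLindelof hF X U hUo
    (eq_univ_of_forall fun x => mem_iUnion.2 ⟨x, hxU x⟩)
  refine ⟨U '' t, ht.image _, by simpa [sUnion_image] using hAt, ?_⟩
  rintro _ ⟨x, _, rfl⟩
  exact ⟨hUo x, hUG x⟩

/-- Finite intersections of closures of a family of sets. -/
def finCl {X : Type u} [TopologicalSpace X] (𝒱 : Set (Set X)) : Set (Set X) :=
  (fun t : Set (Set X) => ⋂ U ∈ t, closure U) '' {t | t.Finite ∧ t ⊆ 𝒱}

lemma finCl_countable {X : Type u} [TopologicalSpace X] {𝒱 : Set (Set X)}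
    (h : 𝒱.Countable) : (finCl 𝒱).Countable :=
  (Set.countable_setOf_finite_subset h).image _

lemma finCl_closed {X : Type u} [TopologicalSpace X] {𝒱 : Set (Set X)} {D : Set X}
    (h : D ∈ finCl 𝒱) : IsClosed D := by
  obtain ⟨t, _, rfl⟩ := h
  exact isClosed_biInter fun _ _ => isClosed_closure

lemma exists_finCl {X : Type u} [TopologicalSpace X] {G : ℕ → Set (X × X)}
    (hG : diagonal X = ⋂ n, G n) {𝒰 : ℕ → Set (Set X)}
    (h𝒰 : ∀ n, ∀ U ∈ 𝒰 n, closure U ×ˢ closure U ⊆ G n) {x : X}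
    (hx : ∀ n, x ∈ ⋃₀ 𝒰 n) {C : Set X} (hC : IsCompact C) (hxC : x ∉ C) :
    ∃ D ∈ finCl (⋃ n, 𝒰 n), x ∈ D ∧ Disjoint D C := by
  choose U hU hxU using hx
  have hemp : C ∩ ⋂ n, closure (U n) = ∅ := by
    by_contra hne
    obtain ⟨c, hc, hcU⟩ := nonempty_iff_ne_empty.2 hne
    have : (x, c) ∈ diagonal X := by
      rw [hG]
      exact mem_iInter.2 fun n => h𝒰 n _ (hU n) ⟨subset_closure (hxU n), mem_iInter.1 hcU n⟩
    have hxc : x = c := this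
    exact hxC (hxc ▸ hc)
  obtain ⟨u, hu⟩ := hC.elim_finite_subfamily_closed _ (fun n => isClosed_closure) hemp
  refine ⟨_, ⟨U '' (u : Set ℕ), ⟨u.finite_toSet.image _, ?_⟩, rfl⟩, ?_, ?_⟩
  · rintro _ ⟨n, _, rfl⟩
    exact mem_iUnion.2 ⟨n, hU n⟩
  · simp only [biInter_image]
    exact mem_iInter₂.2 fun n _ => subset_closure (hxU n)
  · rw [disjoint_comm, disjoint_iff_inter_eq_empty]
    simpa only [biInter_image, Finset.mem_coe] using hu

/-- A countable family of sets acting as a network at the points of `A`. -/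
def NetOn {X : Type u} [TopologicalSpace X] (A : Set X) : Prop :=
  ∃ N : Set (Set X), N.Countable ∧
    ∀ x ∈ A, ∀ V : Set X, IsOpen V → x ∈ V → ∃ n ∈ N, x ∈ n ∧ n ⊆ V

lemma netOn_of_sigma {X : Type u} [TopologicalSpace X] [T35Space X] {G : ℕ → Set (X × X)}
    (hGo : ∀ n, IsOpen (G n)) (hG : diagonal X = ⋂ n, G n) {A : Set X}
    (h : IsLindelofSigma A) : NetOn A := by
  obtain ⟨F, hF, hN⟩ := h.netMod
  have := fun n => cover_refine hF hN (G n) (hGo n) (hG ▸ iInter_subset G n)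
  choose 𝒰 h𝒰c hA h𝒰 using this
  refine ⟨image2 (· ∩ ·) F (finCl (⋃ n, 𝒰 n)),
    hF.image2 (finCl_countable (countable_iUnion h𝒰c)) _, ?_⟩
  intro x hx V hV hxV
  obtain ⟨C, hC, hxC, hCF⟩ := hN x hx
  obtain ⟨D, hD, hxD, hDC⟩ := exists_finCl hG (fun n U hU => (h𝒰 n U hU).2)
    (fun n => hA n hx) (hC.diff hV) (fun h => h.2 hxV)
  obtain ⟨S, hS, hCS, hSV⟩ := hCF (V ∪ Dᶜ) (hV.union (finCl_closed hD).isOpen_compl) (by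
    intro c hc
    by_cases hcV : c ∈ V
    · exact Or.inl hcV
    · exact Or.inr fun hcD => disjoint_left.1 hDC hcD ⟨hc, hcV⟩)
  refine ⟨S ∩ D, ⟨S, hS, D, hD, rfl⟩, ⟨hCS hxC, hxD⟩, ?_⟩
  rintro y ⟨hyS, hyD⟩
  exact (hSV hyS).resolve_right fun h => h hyD

lemma netOn_sUnion {X : Type u} [TopologicalSpace X] {𝒜 : Set (Set X)} (hc : 𝒜.Countable)
    (h : ∀ A ∈ 𝒜, NetOn A) : NetOn (⋃₀ 𝒜) := by
  choose! N hN hNn using h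
  refine ⟨⋃ A ∈ 𝒜, N A, hc.biUnion hN, ?_⟩
  rintro x ⟨A, hA, hx⟩ V hV hxV
  obtain ⟨n, hn, h⟩ := hNn A hA x hx V hV hxV
  exact ⟨n, mem_biUnion hA hn, h⟩

/-- A CO-charming space with a `Gδ`-diagonal has a countable network. -/
theorem COCharming_gdelta_diagonal_countable_network {X : Type u} [TopologicalSpace X]
    [T35Space X] (hX : IsCOCharming X) (hdiag : IsGδ (Set.diagonal X)) :
    HasCountableNetwork X := by
  obtain ⟨K, hK, hKs, hX⟩ := hX
  obtain ⟨G, hGo, hG⟩ := isGδ_iff_eq_iInter_nat.1 hdiag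
  obtain ⟨F, hF, hN⟩ := hKs.netMod
  have := fun n => cover_refine hF hN (G n) (hGo n) (hG ▸ iInter_subset G n)
  choose 𝒰 h𝒰c hA h𝒰 using this
  have hmain : NetOn (⋃₀ (({K} ∪ range fun n => (⋃₀ 𝒰 n)ᶜ) ∪
      {D | D ∈ finCl (⋃ n, 𝒰 n) ∧ Disjoint D K})) := by
    refine netOn_sUnion (((countable_singleton K).union (countable_range _)).union
      ((finCl_countable (countable_iUnion h𝒰c)).mono fun D hD => hD.1)) ?_
    rintro A ((hAK | ⟨n, rfl⟩) | ⟨hD, hDK⟩)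
    · rw [mem_singleton_iff.1 hAK]
      exact netOn_of_sigma hGo hG hKs
    · exact netOn_of_sigma hGo hG
        (hX _ (isOpen_sUnion fun U hU => (h𝒰 n U hU).1) (hA n))
    · have := hX Aᶜ (finCl_closed hD).isOpen_compl (subset_compl_iff_disjoint_left.2 hDK)
      rw [compl_compl] at this
      exact netOn_of_sigma hGo hG this
  obtain ⟨N, hNc, hNn⟩ := hmain
  refine ⟨N, hNc, fun x => hNn x ?_⟩
  by_cases hxK : x ∈ K
  · exact ⟨K, Or.inl (Or.inl rfl), hxK⟩
  by_cases hx : ∀ n, x ∈ ⋃₀ 𝒰 n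
  · obtain ⟨D, hD, hxD, hDK⟩ := exists_finCl hG (fun n U hU => (h𝒰 n U hU).2) hx hK hxK
    exact ⟨D, Or.inr ⟨hD, hDK⟩, hxD⟩
  · push Not at hx
    obtain ⟨n, hn⟩ := hx
    exact ⟨_, Or.inl (Or.inr ⟨n, rfl⟩), hn⟩
end

section
/- Every closed subspace of a weak (4,4)-structured space is weak (4,4)-structured: if X is a weak (4,4)-structured topological space and F is a closed subset of X, then F with the subspace topology is weak (4,4)-structured. -/
open Set Function TopologicalSpace

universe u

theorem perfect_restrict {Y Z : Type u} [TopologicalSpace Y] [TopologicalSpace Z]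
    {g : Y → Z} (hg : PerfectMap g) {K : Set Y} (hK : IsClosed K) :
    ∃ g' : K → (g '' K : Set Z), PerfectMap g' ∧ Surjective g' := by
  obtain ⟨hc, hcl, hf⟩ := hg
  refine ⟨fun y => ⟨g y, mem_image_of_mem g y.2⟩, ⟨?_, ?_, ?_⟩, ?_⟩
  · exact (hc.comp continuous_subtype_val).subtype_mk _
  · intro C hC
    have h1 : IsClosed (g '' (Subtype.val '' C)) :=
      hcl _ (hK.isClosedEmbedding_subtypeVal.isClosedMap _ hC)
    convert h1.preimage (continuous_subtype_val (p := fun z => z ∈ g '' K)) using 1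
    ext z
    simp only [mem_image, mem_preimage, Subtype.ext_iff]
    constructor
    · rintro ⟨x, hx, h⟩
      exact ⟨x, ⟨x, hx, rfl⟩, h⟩
    · rintro ⟨_, ⟨x, hx, rfl⟩, h⟩
      exact ⟨x, hx, h⟩
  · intro z
    have := hK.isClosedEmbedding_subtypeVal.isCompact_preimage (hf z.1)
    convert this using 1
    ext y
    simp [Subtype.ext_iff]
  · rintro ⟨_, y, hy, rfl⟩
    exact ⟨⟨y, hy⟩, rfl⟩

theorem surj_restrict {Y X : Type u} [TopologicalSpace Y] [TopologicalSpace X]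
    {f : Y → X} (hf : Continuous f) (hs : Surjective f) (F : Set X) :
    ∃ f' : (f ⁻¹' F : Set Y) → F, Continuous f' ∧ Surjective f' := by
  refine ⟨fun y => ⟨f y, y.2⟩, (hf.comp continuous_subtype_val).subtype_mk _, ?_⟩
  rintro ⟨x, hx⟩
  obtain ⟨y, rfl⟩ := hs x
  exact ⟨⟨y, hx⟩, rfl⟩

theorem sigma_closed {X : Type u} [TopologicalSpace X] (hX : IsLindelofSigma X)
    {F : Set X} (hF : IsClosed F) : IsLindelofSigma F := by
  obtain ⟨Y, tY, Z, tZ, hZ, ⟨f, hf, hfs⟩, g, hg, hgs⟩ := hX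
  exact ⟨(f ⁻¹' F : Set Y), inferInstance, (g '' (f ⁻¹' F) : Set Z), inferInstance,
    inferInstance, surj_restrict hf hfs F, perfect_restrict hg (hF.preimage hf)⟩

theorem sigma_image {X X' : Type u} [TopologicalSpace X] [TopologicalSpace X']
    (hX : IsLindelofSigma X) (e : X → X') (he : Continuous e) (hs : Surjective e) :
    IsLindelofSigma X' := by
  obtain ⟨Y, tY, Z, tZ, hZ, ⟨f, hf, hfs⟩, hg⟩ := hX
  exact ⟨Y, tY, Z, tZ, hZ, ⟨e ∘ f, he.comp hf, hs.comp hfs⟩, hg⟩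

theorem charming_closed {X : Type u} [TopologicalSpace X] (hX : IsCharming X)
    {F : Set X} (hF : IsClosed F) : IsCharming F := by
  obtain ⟨S, hS, h⟩ := hX
  refine ⟨Subtype.val ⁻¹' S, ?_, ?_⟩
  · have h1 : IsLindelofSigma (Subtype.val ⁻¹' F : Set S) :=
      sigma_closed hS (hF.preimage continuous_subtype_val)
    refine sigma_image h1 (fun x => ⟨⟨x.1.1, x.2⟩, x.1.2⟩) ?_ ?_
    · exact ((continuous_subtype_val.comp continuous_subtype_val).subtype_mk _).subtype_mk _
    · rintro ⟨⟨x, hx⟩, hx'⟩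
      exact ⟨⟨⟨x, hx'⟩, hx⟩, rfl⟩
  · intro U hU hSU
    obtain ⟨V, hV, rfl⟩ := isOpen_induced_iff.1 hU
    have h1 := h (V ∪ Fᶜ) (hV.union hF.isOpen_compl) (by
      intro x hx
      by_cases hxF : x ∈ F
      · exact Or.inl (hSU (a := ⟨x, hxF⟩) hx)
      · exact Or.inr hxF)
    have hm : ∀ x : ↥(V ∪ Fᶜ)ᶜ, x.1 ∈ F := fun x => by
      by_contra hx
      exact x.2 (Or.inr hx)
    refine sigma_image h1 (fun x => ⟨⟨x.1, hm x⟩, fun hx => x.2 (Or.inl hx)⟩) ?_ ?_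
    · exact (continuous_subtype_val.subtype_mk _).subtype_mk _
    · rintro ⟨⟨x, hx⟩, hx'⟩
      exact ⟨⟨x, fun h => h.elim hx' (fun h => h hx)⟩, rfl⟩

/-- Every closed subspace of a weak (4,4)-structured space is weak (4,4)-structured. -/
theorem closed_subspace_of_weak44 {X : Type u} [TopologicalSpace X] [T35Space X]
    (hX : IsWeak44Structured X) (F : Set X) (hF : IsClosed F) :
    IsWeak44Structured ↥F := by
  obtain ⟨Y, tY, M, tM, hM, ⟨f, hf, hfs⟩, g, hg, hgs⟩ := hX
  exact ⟨(f ⁻¹' F : Set Y), inferInstance, (g '' (f ⁻¹' F) : Set M), inferInstance,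
    charming_closed hM (hg.2.1 _ (hF.preimage hf)), surj_restrict hf hfs F,
    perfect_restrict hg (hF.preimage hf)⟩
end

section
/- For a Tychonoff topological space X, the following are equivalent: (1) X is weak (4,4)-structured; (2) there exist a compact Hausdorff space K, a charming space M, a closed subset F of K × M (with the product topology), and a continuous surjection from F (with the subspace topology) onto X; (3) there exist a charming space M and a set-valued map φ assigning to each x ∈ M a compact subset φ(x) of X, such that ⋃_{x∈M} φ(x) = X and for every open set U ⊆ X the set {x ∈ M : φ(x) ⊆ U} is open in M. -/
open Set Function TopologicalSpace

universe u

theorem w44_one_three {X : Type u} [TopologicalSpace X] (h : IsWeak44Structured X) :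
    ∃ (M : Type u) (tM : TopologicalSpace M) (φ : M → Set X),
        @IsCharming M tM ∧
        (∀ x : M, IsCompact (φ x)) ∧
        (⋃ x : M, φ x) = Set.univ ∧
        ∀ U : Set X, IsOpen U → @IsOpen M tM {x : M | φ x ⊆ U} := by
  obtain ⟨Y, tY, M, tM, hM, ⟨f, hf, hfs⟩, ⟨g, ⟨hg, hgc, hgk⟩, hgs⟩⟩ := h
  refine ⟨M, tM, fun m => f '' (g ⁻¹' {m}), hM, fun m => (hgk m).image hf, ?_, ?_⟩
  · refine eq_univ_of_forall fun x => ?_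
    obtain ⟨y, rfl⟩ := hfs x
    exact mem_iUnion.2 ⟨g y, y, rfl, rfl⟩
  · intro U hU
    have h1 : IsClosed (g '' (f ⁻¹' U)ᶜ) := hgc _ (hU.preimage hf).isClosed_compl
    convert h1.isOpen_compl using 1
    ext m
    constructor
    · rintro h ⟨y, hy, rfl⟩
      exact hy (h ⟨y, rfl, rfl⟩)
    · rintro h _ ⟨y, hy, rfl⟩
      by_contra hn
      exact h ⟨y, hn, hy⟩

theorem w44_closed_graph {X K M : Type u} [TopologicalSpace X] [TopologicalSpace K]
    [TopologicalSpace M] [T2Space K] (i : X → K) (hi : Continuous i)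
    (φ : M → Set X) (hk : ∀ x : M, IsCompact (φ x))
    (hu : ∀ U : Set X, IsOpen U → IsOpen {x : M | φ x ⊆ U}) :
    IsClosed {p : K × M | p.1 ∈ i '' φ p.2} := by
  rw [← isOpen_compl_iff, isOpen_iff_forall_mem_open]
  rintro ⟨k, m⟩ hp
  have hp' : k ∉ i '' φ m := hp
  obtain ⟨V, W, hV, hW, hkV, hmW, hd⟩ := SeparatedNhds.of_isCompact_isCompact
    (isCompact_singleton (x := k)) ((hk m).image hi) (disjoint_singleton_left.2 hp')
  refine ⟨V ×ˢ {x : M | φ x ⊆ i ⁻¹' W}, ?_, hV.prod (hu _ (hW.preimage hi)), ?_⟩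
  · rintro ⟨k', m'⟩ ⟨h1, h2⟩ ⟨x, hx, hxk⟩
    have h3 : i x ∈ W := h2 hx
    have hxk' : i x = k' := hxk
    exact disjoint_left.1 hd h1 (hxk' ▸ h3)
  · exact ⟨hkV rfl, fun x hx => hmW ⟨x, hx, rfl⟩⟩

theorem w44_three_two {X : Type u} [TopologicalSpace X] [T35Space X]
    (h : ∃ (M : Type u) (tM : TopologicalSpace M) (φ : M → Set X),
        @IsCharming M tM ∧
        (∀ x : M, IsCompact (φ x)) ∧
        (⋃ x : M, φ x) = Set.univ ∧
        ∀ U : Set X, IsOpen U → @IsOpen M tM {x : M | φ x ⊆ U}) :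
    ∃ (K : Type u) (tK : TopologicalSpace K) (M : Type u) (tM : TopologicalSpace M),
        @CompactSpace K tK ∧ @T2Space K tK ∧ @IsCharming M tM ∧
        ∃ F : Set (K × M),
          @IsClosed (K × M) (@instTopologicalSpaceProd K M tK tM) F ∧
          ∃ f : F → X,
            @Continuous (↥F) X
              (@instTopologicalSpaceSubtype (K × M) (fun z => z ∈ F)
                (@instTopologicalSpaceProd K M tK tM)) _ f ∧
            Surjective f := by
  obtain ⟨M, tM, φ, hM, hk, hs, hu⟩ := h
  have he : Topology.IsEmbedding (stoneCechUnit : X → StoneCech X) :=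
    isDenseEmbedding_stoneCechUnit.isEmbedding
  refine ⟨StoneCech X, inferInstance, M, tM, inferInstance, inferInstance, hM,
    {p | p.1 ∈ stoneCechUnit '' φ p.2}, w44_closed_graph _ he.continuous φ hk hu, ?_⟩
  refine ⟨fun p => p.2.choose, ?_, ?_⟩
  · rw [he.continuous_iff]
    have : (stoneCechUnit ∘ fun p : {p : StoneCech X × M | p.1 ∈ stoneCechUnit '' φ p.2} =>
        p.2.choose) = fun p => p.1.1 := funext fun p => p.2.choose_spec.2
    rw [this]
    exact continuous_fst.comp continuous_subtype_val
  · intro x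
    have hx : x ∈ ⋃ m, φ m := hs ▸ mem_univ x
    obtain ⟨m, hm⟩ := mem_iUnion.1 hx
    have hp : ((stoneCechUnit x, m) : StoneCech X × M) ∈
      {p : StoneCech X × M | p.1 ∈ stoneCechUnit '' φ p.2} := ⟨x, hm, rfl⟩
    exact ⟨⟨_, hp⟩, he.injective hp.choose_spec.2⟩

theorem w44_sigma_empty (Y : Type u) [TopologicalSpace Y] [IsEmpty Y] : IsLindelofSigma Y := by
  refine ⟨Y, inferInstance, Y, inferInstance, inferInstance, ⟨id, continuous_id, surjective_id⟩,
    ⟨id, ⟨continuous_id, fun s hs => by simpa using hs, fun z => isEmptyElim z⟩, surjective_id⟩⟩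

theorem w44_two_one {X : Type u} [TopologicalSpace X]
    (h : ∃ (K : Type u) (tK : TopologicalSpace K) (M : Type u) (tM : TopologicalSpace M),
        @CompactSpace K tK ∧ @T2Space K tK ∧ @IsCharming M tM ∧
        ∃ F : Set (K × M),
          @IsClosed (K × M) (@instTopologicalSpaceProd K M tK tM) F ∧
          ∃ f : F → X,
            @Continuous (↥F) X
              (@instTopologicalSpaceSubtype (K × M) (fun z => z ∈ F)
                (@instTopologicalSpaceProd K M tK tM)) _ f ∧
            Surjective f) : IsWeak44Structured X := by
  rcases isEmpty_or_nonempty X with hX | ⟨⟨x0⟩⟩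
  · refine ⟨X, inferInstance, X, inferInstance,
      ⟨∅, w44_sigma_empty _, fun U _ _ => w44_sigma_empty _⟩, ⟨id, continuous_id, surjective_id⟩,
      ⟨id, ⟨continuous_id, fun s hs => by simpa using hs, fun z => isEmptyElim z⟩,
        surjective_id⟩⟩
  obtain ⟨K, tK, M, tM, hK, hK2, hM, F, hF, f, hf, hfs⟩ := h
  -- adjoining a copy of `M` makes the projection surjective
  refine ⟨F ⊕ M, inferInstance, M, tM, hM, ⟨Sum.elim f fun _ => x0,
    hf.sumElim continuous_const, fun x => ?_⟩, Sum.elim (fun p => p.1.2) id, ⟨?_, ?_, ?_⟩, ?_⟩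
  · obtain ⟨p, hp⟩ := hfs x
    exact ⟨Sum.inl p, hp⟩
  · exact (continuous_snd.comp continuous_subtype_val).sumElim continuous_id
  · intro A hA
    rw [isClosed_sum_iff] at hA
    have h1 : IsClosed (Prod.snd '' (Subtype.val '' (Sum.inl ⁻¹' A) : Set (K × M))) :=
      isClosedMap_snd_of_compactSpace _ (hF.isClosedMap_subtype_val _ hA.1)
    convert h1.union hA.2 using 1
    ext m
    constructor
    · rintro ⟨p | m', hp, rfl⟩
      · exact Or.inl ⟨p.1, ⟨p, hp, rfl⟩, rfl⟩
      · exact Or.inr hp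
    · rintro (⟨_, ⟨p, hp, rfl⟩, rfl⟩ | hp)
      · exact ⟨Sum.inl p, hp, rfl⟩
      · exact ⟨Sum.inr m, hp, rfl⟩
  · intro m
    have h1 : IsCompact ((Subtype.val : F → K × M) ⁻¹' (univ ×ˢ {m})) :=
      hF.isClosedEmbedding_subtypeVal.isCompact_preimage (isCompact_univ.prod isCompact_singleton)
    have h2 := (h1.image (continuous_inl (X := F) (Y := M))).union
      ((isCompact_singleton (x := m)).image (continuous_inr (X := F) (Y := M)))
    convert h2 using 1
    ext (p | m') <;> simp
  · exact fun m => ⟨Sum.inr m, rfl⟩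

/-- Characterizations of weak (4,4)-structured spaces: (1) ↔ (2) ↔ (3). -/
theorem weak44_characterizations {X : Type u} [TopologicalSpace X] [T35Space X] :
    (IsWeak44Structured X ↔
      ∃ (K : Type u) (tK : TopologicalSpace K) (M : Type u) (tM : TopologicalSpace M),
        @CompactSpace K tK ∧ @T2Space K tK ∧ @IsCharming M tM ∧
        ∃ F : Set (K × M),
          @IsClosed (K × M) (@instTopologicalSpaceProd K M tK tM) F ∧
          ∃ f : F → X,
            @Continuous (↥F) X
              (@instTopologicalSpaceSubtype (K × M) (fun z => z ∈ F)
                (@instTopologicalSpaceProd K M tK tM)) _ f ∧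
            Surjective f) ∧
    (IsWeak44Structured X ↔
      ∃ (M : Type u) (tM : TopologicalSpace M) (φ : M → Set X),
        @IsCharming M tM ∧
        (∀ x : M, IsCompact (φ x)) ∧
        (⋃ x : M, φ x) = Set.univ ∧
        ∀ U : Set X, IsOpen U → @IsOpen M tM {x : M | φ x ⊆ U}) := by
  exact ⟨⟨fun h => w44_three_two (w44_one_three h), w44_two_one⟩,
    ⟨w44_one_three, fun h => w44_two_one (w44_three_two h)⟩⟩
end

section
/- Let G be a rectifiable space with rectification φ, right neutral element e, and operations p = π₂ ∘ φ⁻¹ and q = π₂ ∘ φ. For every subset A of G there exists a subset H of G with A ⊆ H, e ∈ H, p(H × H) ⊆ H and q(H × H) ⊆ H (so H is a rectifiable subspace of G); moreover, if A with the subspace topology is a Lindelöf Σ-space, then H can be chosen so that H with the subspace topology is a Lindelöf Σ-space. -/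
open Set Function TopologicalSpace

universe u

/-- Auxiliary form of the Lindelöf Σ-property for subsets. -/
def LSigmaSet {G : Type u} [TopologicalSpace G] (S : Set G) : Prop :=
  ∃ (Y : Type u) (_ : TopologicalSpace Y) (Z : Type u) (_ : TopologicalSpace Z)
    (f : Y → G) (g : Y → Z), SecondCountableTopology Z ∧ Continuous f ∧ range f = S ∧
      IsProperMap g ∧ Surjective g

theorem lsigmaSet_iff {G : Type u} [TopologicalSpace G] (S : Set G) :
    IsLindelofSigma ↥S ↔ LSigmaSet S := by
  constructor
  · rintro ⟨Y, tY, Z, tZ, hZ, ⟨f, hf, hfs⟩, ⟨g, hg, hgs⟩⟩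
    refine ⟨Y, tY, Z, tZ, fun y => (f y : G), g, hZ, continuous_subtype_val.comp hf, ?_,
      isProperMap_iff_isClosedMap_and_compact_fibers.2 hg, hgs⟩
    rw [show (fun y => (f y : G)) = Subtype.val ∘ f from rfl, range_comp, hfs.range_eq]
    simp
  · rintro ⟨Y, tY, Z, tZ, f, g, hZ, hf, rfl, hg, hgs⟩
    exact ⟨Y, tY, Z, tZ, hZ, ⟨rangeFactorization f, hf.subtype_mk _,
      rangeFactorization_surjective⟩,
      g, isProperMap_iff_isClosedMap_and_compact_fibers.1 hg, hgs⟩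

theorem lsigmaSet_singleton {G : Type u} [TopologicalSpace G] (e : G) :
    LSigmaSet ({e} : Set G) :=
  ⟨PUnit, inferInstance, PUnit, inferInstance, fun _ => e, id, inferInstance,
    continuous_const, by simp, isProperMap_id, surjective_id⟩

theorem LSigmaSet.image2 {G : Type u} [TopologicalSpace G] {S T : Set G}
    (hS : LSigmaSet S) (hT : LSigmaSet T) (p : G × G → G) (hp : Continuous p) :
    LSigmaSet (p '' (S ×ˢ T)) := by
  obtain ⟨Y, tY, Z, tZ, f, g, hZ, hf, rfl, hg, hgs⟩ := hS
  obtain ⟨Y', tY', Z', tZ', f', g', hZ', hf', rfl, hg', hgs'⟩ := hT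
  refine ⟨Y × Y', inferInstance, Z × Z', inferInstance, p ∘ Prod.map f f', Prod.map g g',
    inferInstance, hp.comp (hf.prodMap hf'), ?_, hg.prodMap hg', hgs.prodMap hgs'⟩
  rw [range_comp, range_prodMap]

theorem isProperMap_sigmaMap {ι : Type*} {Y Z : ι → Type*} [∀ i, TopologicalSpace (Y i)]
    [∀ i, TopologicalSpace (Z i)] (g : ∀ i, Y i → Z i) (hg : ∀ i, IsProperMap (g i)) :
    IsProperMap (Sigma.map id g : (Σ i, Y i) → Σ i, Z i) := by
  rw [isProperMap_iff_isClosedMap_and_compact_fibers]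
  refine ⟨Continuous.sigma_map fun i => (hg i).continuous, ?_, ?_⟩
  · intro C hC
    rw [isClosed_sigma_iff] at hC ⊢
    intro i
    have : Sigma.mk i ⁻¹' (Sigma.map id g '' C) = g i '' (Sigma.mk i ⁻¹' C) := by
      ext z
      constructor
      · rintro ⟨⟨j, y⟩, hy, h⟩
        simp only [Sigma.map, id, Sigma.mk.injEq] at h
        obtain ⟨rfl, h⟩ := h
        exact ⟨y, hy, eq_of_heq h⟩
      · rintro ⟨y, hy, rfl⟩
        exact ⟨⟨i, y⟩, hy, rfl⟩
    rw [this]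
    exact (hg i).isClosedMap _ (hC i)
  · rintro ⟨i, z⟩
    have : Sigma.map id g ⁻¹' {(⟨i, z⟩ : Σ i, Z i)} = Sigma.mk i '' (g i ⁻¹' {z}) := by
      ext ⟨j, y⟩
      constructor
      · intro h
        simp only [Sigma.map, id, mem_preimage, mem_singleton_iff, Sigma.mk.injEq] at h
        obtain ⟨rfl, h⟩ := h
        exact ⟨y, eq_of_heq h, rfl⟩
      · rintro ⟨y', hy, h⟩
        rw [← h]
        have : g i y' = z := hy
        simp [Sigma.map, this]
    rw [this]
    exact ((hg i).isCompact_preimage isCompact_singleton).image continuous_sigmaMk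

theorem LSigmaSet.iUnion {G : Type u} [TopologicalSpace G] {ι : Type} [Countable ι]
    {S : ι → Set G} (hS : ∀ i, LSigmaSet (S i)) : LSigmaSet (⋃ i, S i) := by
  choose Y tY Z tZ f g hZ hf hr hg hgs using hS
  refine ⟨Σ i, Y i, inferInstance, Σ i, Z i, inferInstance, fun y => f y.1 y.2,
    Sigma.map id g, inferInstance, continuous_sigma hf, ?_, isProperMap_sigmaMap g hg,
    surjective_id.sigma_map hgs⟩
  ext x
  simp only [mem_range, Sigma.exists, mem_iUnion, ← hr]

theorem LSigmaSet.union {G : Type u} [TopologicalSpace G] {S T : Set G}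
    (hS : LSigmaSet S) (hT : LSigmaSet T) : LSigmaSet (S ∪ T) := by
  rw [union_eq_iUnion]
  exact LSigmaSet.iUnion (by rintro (_ | _) <;> assumption)

/-- Stages of the hull. -/
def hullStage {G : Type u} (e : G) (p q : G × G → G) (A : Set G) : ℕ → Set G
  | 0 => A ∪ {e}
  | n + 1 => hullStage e p q A n ∪
      (p '' (hullStage e p q A n ×ˢ hullStage e p q A n) ∪
        q '' (hullStage e p q A n ×ˢ hullStage e p q A n))

theorem hullStage_mono {G : Type u} (e : G) (p q : G × G → G) (A : Set G) :
    Monotone (hullStage e p q A) :=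
  monotone_nat_of_le_succ fun _ => subset_union_left

/-- For any subset `A` of a rectifiable space `G` there is a rectifiable subspace `H ⊇ A`
containing `e` and closed under `p` and `q`; moreover, if `A` is a Lindelöf Σ-subspace then
`H` can be chosen to be a Lindelöf Σ-subspace. -/
theorem rectifiable_hull {G : Type u} [TopologicalSpace G] [T35Space G]
    (φ : G × G ≃ₜ G × G) (e : G)
    (hπ : ∀ z : G × G, (φ z).1 = z.1)
    (hφ : ∀ x : G, φ (x, x) = (x, e))
    (p q : G × G → G)
    (hp : p = fun z => (φ.symm z).2)
    (hq : q = fun z => (φ z).2)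
    (A : Set G) :
    ∃ H : Set G, A ⊆ H ∧ e ∈ H ∧
      (∀ x ∈ H, ∀ y ∈ H, p (x, y) ∈ H) ∧
      (∀ x ∈ H, ∀ y ∈ H, q (x, y) ∈ H) ∧
      (IsLindelofSigma ↥A → IsLindelofSigma ↥H) := by
  have hpc : Continuous p := by rw [hp]; fun_prop
  have hqc : Continuous q := by rw [hq]; fun_prop
  have hm := hullStage_mono e p q A
  have key : ∀ x ∈ ⋃ n, hullStage e p q A n, ∀ y ∈ ⋃ n, hullStage e p q A n,
      ∃ n, (x, y) ∈ hullStage e p q A n ×ˢ hullStage e p q A n := by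
    intro x hx y hy
    obtain ⟨m, hx⟩ := mem_iUnion.1 hx
    obtain ⟨n, hy⟩ := mem_iUnion.1 hy
    exact ⟨max m n, hm (le_max_left m n) hx, hm (le_max_right m n) hy⟩
  refine ⟨⋃ n, hullStage e p q A n, fun x hx => mem_iUnion.2 ⟨0, Or.inl hx⟩,
    mem_iUnion.2 ⟨0, Or.inr rfl⟩, ?_, ?_, ?_⟩
  · intro x hx y hy
    obtain ⟨n, hn⟩ := key x hx y hy
    exact mem_iUnion.2 ⟨n + 1, Or.inr (Or.inl (mem_image_of_mem p hn))⟩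
  · intro x hx y hy
    obtain ⟨n, hn⟩ := key x hx y hy
    exact mem_iUnion.2 ⟨n + 1, Or.inr (Or.inr (mem_image_of_mem q hn))⟩
  · intro hA
    rw [lsigmaSet_iff] at hA ⊢
    refine LSigmaSet.iUnion fun n => ?_
    induction n with
    | zero => exact hA.union (lsigmaSet_singleton e)
    | succ n ih => exact ih.union ((ih.image2 ih p hpc).union (ih.image2 ih q hqc))
end

section
/- The Suslin number of an arbitrary charming rectifiable space is countable: if G is a rectifiable space that is a charming space, then every pairwise disjoint family of nonempty open subsets of G is countable. -/
open Set Function TopologicalSpace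

universe u

open Filter Topology

/-- Countable network modulo a compact cover (relative version). -/
def SigSet {G : Type u} [TopologicalSpace G] (S : Set G) : Prop :=
  ∃ F : Set (Set G), F.Countable ∧ ∀ y ∈ S, ∃ K : Set G, IsCompact K ∧
    ∀ U : Set G, IsOpen U → K ⊆ U → ∃ s ∈ F, y ∈ s ∧ s ⊆ U

lemma SigSet.of_lindelofSigma {G : Type u} [TopologicalSpace G] {S : Set G}
    (h : IsLindelofSigma S) : SigSet S := by
  obtain ⟨Y, tY, Z, tZ, hZ, ⟨f, hf, hfs⟩, ⟨g, ⟨hg, hgc, hgk⟩, hgs⟩⟩ := h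
  refine ⟨(fun B : Set Z => (fun t => (f t : G)) '' (g ⁻¹' B)) '' (countableBasis Z),
    (countable_countableBasis Z).image _, ?_⟩
  intro y hy
  obtain ⟨t, ht⟩ := hfs ⟨y, hy⟩
  have hc : Continuous (fun t => (f t : G)) := continuous_subtype_val.comp hf
  refine ⟨(fun t => (f t : G)) '' (g ⁻¹' {g t}), (hgk (g t)).image hc, ?_⟩
  intro U hU hKU
  have hO : IsOpen ((fun t => (f t : G)) ⁻¹' U) := hU.preimage hc
  have hcl := hgc _ hO.isClosed_compl
  have hmem : g t ∈ (g '' ((fun t => (f t : G)) ⁻¹' U)ᶜ)ᶜ := by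
    rintro ⟨s, hs, hst⟩
    exact hs (hKU ⟨s, hst, rfl⟩)
  obtain ⟨B, hB, htB, hBs⟩ := (isBasis_countableBasis Z).exists_subset_of_mem_open hmem
    hcl.isOpen_compl
  refine ⟨_, ⟨B, hB, rfl⟩, ⟨t, htB, by simp [ht]⟩, ?_⟩
  rintro _ ⟨s, hs, rfl⟩
  by_contra hcon
  exact hBs hs ⟨s, hcon, rfl⟩

lemma SigSet.mono {G : Type u} [TopologicalSpace G] {S T : Set G}
    (h : SigSet S) (hT : T ⊆ S) : SigSet T := by
  obtain ⟨F, hF, h⟩ := h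
  exact ⟨F, hF, fun y hy => h y (hT hy)⟩

lemma SigSet.image {G : Type u} [TopologicalSpace G] {S : Set G}
    (h : SigSet S) (f : G → G) (hf : Continuous f) : SigSet (f '' S) := by
  obtain ⟨F, hF, h⟩ := h
  refine ⟨(fun s => f '' s) '' F, hF.image _, ?_⟩
  rintro _ ⟨y, hy, rfl⟩
  obtain ⟨K, hK, h⟩ := h y hy
  refine ⟨f '' K, hK.image hf, fun U hU hKU => ?_⟩
  obtain ⟨s, hs, hys, hsU⟩ := h (f ⁻¹' U) (hU.preimage hf) (by simpa using hKU)
  exact ⟨_, ⟨s, hs, rfl⟩, ⟨y, hys, rfl⟩, by simpa using hsU⟩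

lemma SigSet.sUnion {G : Type u} [TopologicalSpace G] {P : Set (Set G)}
    (hP : P.Countable) (h : ∀ S ∈ P, SigSet S) : SigSet (⋃₀ P) := by
  choose! F hF h using h
  refine ⟨⋃ S ∈ P, F S, hP.biUnion hF, ?_⟩
  rintro y ⟨S, hS, hy⟩
  obtain ⟨K, hK, h⟩ := h S hS y hy
  refine ⟨K, hK, fun U hU hKU => ?_⟩
  obtain ⟨s, hs, h2⟩ := h U hU hKU
  exact ⟨s, mem_biUnion hS hs, h2⟩

lemma compact_sub {G : Type u} [TopologicalSpace G] {K : Set G} (hK : IsCompact K)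
    (P : Set (Set G)) (hP : ∀ U ∈ P, IsOpen U) (hcov : ∀ x, ∃ U ∈ P, x ∈ U) :
    ∃ T ⊆ P, T.Finite ∧ K ⊆ ⋃₀ T := by
  obtain ⟨T, hT, hTf, hKT⟩ := hK.elim_finite_subcover_image (b := P) (c := id) hP
    (fun x _ => by
      obtain ⟨U, hU, hx⟩ := hcov x
      exact mem_biUnion hU hx)
  exact ⟨T, hT, hTf, by simpa [sUnion_eq_biUnion] using hKT⟩

lemma SigSet.cover {G : Type u} [TopologicalSpace G] {S : Set G}
    (h : SigSet S) (P : Set (Set G)) (hP : ∀ U ∈ P, IsOpen U) (hcov : ∀ x, ∃ U ∈ P, x ∈ U) :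
    ∃ Q ⊆ P, Q.Countable ∧ S ⊆ ⋃₀ Q := by
  obtain ⟨F, hF, h⟩ := h
  let good : Set (Set G) := {s ∈ F | ∃ R : Set (Set G), R ⊆ P ∧ R.Finite ∧ s ⊆ ⋃₀ R}
  have hg : ∀ s ∈ good, ∃ R : Set (Set G), R ⊆ P ∧ R.Finite ∧ s ⊆ ⋃₀ R := fun s hs => hs.2
  choose! R hRP hRf hR using hg
  refine ⟨⋃ s ∈ good, R s, by simpa using hRP,
    (hF.mono (fun s hs => hs.1)).biUnion (fun s hs => (hRf s hs).countable), ?_⟩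
  intro y hy
  obtain ⟨K, hK, h⟩ := h y hy
  obtain ⟨T, hTP, hTf, hT⟩ := compact_sub hK P hP hcov
  obtain ⟨s, hs, hys, hsU⟩ := h (⋃₀ T) (isOpen_sUnion fun t ht => hP t (hTP ht)) hT
  have hsg : s ∈ good := ⟨hs, T, hTP, hTf, hsU⟩
  obtain ⟨t, ht, hyt⟩ := hR s hsg hys
  exact ⟨t, mem_biUnion hsg ht, hyt⟩

/-- Closing-off argument. -/
lemma exists_closed_off {G : Type u} {I : Type u} (x : I → G) (F : Set (Set G))
    (hF : F.Countable) (C : I → Set (Set G)) (hC : ∀ i, (C i).Countable) :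
    ∃ A : Set I, A.Countable ∧ ∀ L : Set (Set G), L.Finite → L ⊆ F ∪ ⋃ i ∈ A, C i →
      (∃ b, x b ∈ ⋂₀ L) → ∃ a ∈ A, x a ∈ ⋂₀ L := by
  have hw : ∀ L : Set (Set G), (∃ b, x b ∈ ⋂₀ L) → ∃ b, x b ∈ ⋂₀ L := fun L h => h
  rcases isEmpty_or_nonempty I with hI | hI
  · exact ⟨∅, countable_empty, fun L _ _ ⟨b, _⟩ => isEmptyElim b⟩
  choose! w hw using hw
  let step : Set I → Set I := fun A =>
    A ∪ w '' {L : Set (Set G) | L.Finite ∧ L ⊆ F ∪ ⋃ i ∈ A, C i}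
  let A : ℕ → Set I := fun n => step^[n] ∅
  have hsucc : ∀ n, A (n+1) = step (A n) := fun n => iterate_succ_apply' step n ∅
  have hmono : Monotone A := monotone_nat_of_le_succ fun n => by
    rw [hsucc]; exact subset_union_left
  have hcount : ∀ n, (A n).Countable := by
    intro n
    induction n with
    | zero => exact countable_empty
    | succ n ih =>
      rw [hsucc]
      exact ih.union ((countable_setOf_finite_subset
        (hF.union (ih.biUnion fun i _ => hC i))).image _)
  refine ⟨⋃ n, A n, countable_iUnion hcount, ?_⟩
  intro L hL hLs hb
  have key : ∃ n, L ⊆ F ∪ ⋃ i ∈ A n, C i := by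
    clear hb
    induction L, hL using Set.Finite.induction_on with
    | empty => exact ⟨0, empty_subset _⟩
    | @insert s L hs hL ih =>
      obtain ⟨n, hn⟩ := ih ((subset_insert _ _).trans hLs)
      have hm : ∃ m, s ∈ F ∪ ⋃ i ∈ A m, C i := by
        rcases hLs (mem_insert s L) with h | h
        · exact ⟨0, Or.inl h⟩
        · simp only [mem_iUnion] at h
          obtain ⟨i, ⟨m, hm⟩, hi⟩ := h
          exact ⟨m, Or.inr (mem_biUnion hm hi)⟩
      obtain ⟨m, hm⟩ := hm
      have mon : ∀ k l, k ≤ l → (F ∪ ⋃ i ∈ A k, C i) ⊆ F ∪ ⋃ i ∈ A l, C i := fun k l hkl =>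
        union_subset_union_right _ (biUnion_subset_biUnion_left (hmono hkl))
      refine ⟨max n m, insert_subset (mon _ _ (le_max_right _ _) hm)
        (hn.trans (mon _ _ (le_max_left _ _)))⟩
  obtain ⟨n, hn⟩ := key
  refine ⟨w L, mem_iUnion.2 ⟨n+1, ?_⟩, hw L hb⟩
  rw [hsucc]
  exact Or.inr ⟨L, ⟨hL, hn⟩, rfl⟩

lemma ccc_of_maltsev {G : Type u} [TopologicalSpace G] [RegularSpace G]
    (M : G → G → G → G) (hM : Continuous fun p : G × G × G => M p.1 p.2.1 p.2.2)
    (h1 : ∀ x y, M x y y = x) (h2 : ∀ x y, M y y x = x)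
    (S : Set G) (hS : SigSet S) (hd : Dense S)
    (𝒰 : Set (Set G)) (hopen : ∀ U ∈ 𝒰, IsOpen U ∧ U.Nonempty)
    (hdisj : 𝒰.PairwiseDisjoint id) : 𝒰.Countable := by
  have hx : ∀ U : 𝒰, ∃ x ∈ (U : Set G), x ∈ S := fun U => by
    obtain ⟨x, h, h'⟩ := hd.inter_open_nonempty U (hopen U U.2).1 (hopen U U.2).2
    exact ⟨x, h, h'⟩
  choose x hxU hxS using hx
  have hC : ∀ U : 𝒰, ∃ C : Set (Set G), C.Countable ∧ S ⊆ ⋃₀ C ∧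
      ∀ s ∈ C, ∀ a ∈ closure s, ∀ b ∈ closure s, M (x U) a b ∈ (U : Set G) := by
    intro U
    obtain ⟨Q, hQP, hQc, hQ⟩ := hS.cover
      {s | IsOpen s ∧ ∀ a ∈ closure s, ∀ b ∈ closure s, M (x U) a b ∈ (U : Set G)}
      (fun s hs => hs.1) (by
        intro y
        have hc : Continuous fun p : G × G => M (x U) p.1 p.2 :=
          hM.comp (by fun_prop : Continuous fun p : G × G => (x U, p.1, p.2))
        have hn : (fun p : G × G => M (x U) p.1 p.2) ⁻¹' (U : Set G) ∈ 𝓝 (y, y) :=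
          ((hopen U U.2).1.preimage hc).mem_nhds (by simpa [h1] using hxU U)
        rw [nhds_prod_eq, mem_prod_same_iff] at hn
        obtain ⟨t, ht, hts⟩ := hn
        obtain ⟨t', ht', hcl, htt⟩ := exists_mem_nhds_isClosed_subset ht
        have hsub : closure (interior t') ⊆ t :=
          (closure_minimal interior_subset hcl).trans htt
        exact ⟨interior t', ⟨isOpen_interior, fun a ha b hb =>
          hts (mk_mem_prod (hsub ha) (hsub hb))⟩, mem_interior_iff_mem_nhds.2 ht'⟩)
    exact ⟨Q, hQc, hQ, fun s hs => (hQP hs).2⟩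
  choose C hCc hCS hCM using hC
  obtain ⟨F, hF, hFK⟩ := hS
  obtain ⟨A, hA, hAcl⟩ := exists_closed_off x F hF C hCc
  by_contra hunc
  have hb : ∃ b, b ∉ A := by
    by_contra! hall
    have : A = univ := eq_univ_of_forall hall
    rw [this] at hA
    exact hunc (countable_coe_iff.1 (countable_univ_iff.1 hA))
  obtain ⟨b, hbA⟩ := hb
  obtain ⟨K, hK, hKF⟩ := hFK (x b) (hxS b)
  let T : Set (Set G) := {s | s ∈ (F ∪ ⋃ i ∈ A, C i) ∧ x b ∈ s}
  let B : Filter G := generate T ⊓ 𝓟 (x '' A)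
  have hB : B.NeBot := by
    rw [inf_principal_neBot_iff]
    intro U hU
    obtain ⟨L, hLT, hLf, hLU⟩ := mem_generate_iff.1 hU
    obtain ⟨a, ha, hxa⟩ := hAcl L hLf (fun s hs => (hLT hs).1) ⟨b, fun s hs => (hLT hs).2⟩
    exact ⟨x a, hLU hxa, a, ha, rfl⟩
  have hTB : ∀ s ∈ T, s ∈ B := fun s hs => mem_inf_of_left (mem_generate_of_mem hs)
  have hy : ∃ y ∈ K, ClusterPt y B := by
    by_contra! hno
    have hdj : Disjoint (𝓝ˢ K) B := hK.disjoint_nhdsSet_left.2 fun y hy => by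
      have := hno y hy
      rwa [ClusterPt, not_neBot, ← disjoint_iff] at this
    obtain ⟨U, hU, V, hV, hUV⟩ := Filter.disjoint_iff.1 hdj
    obtain ⟨O, hO, hKO, hOU⟩ := mem_nhdsSet_iff_exists.1 hU
    obtain ⟨s, hs, hbs, hsO⟩ := hKF O hO hKO
    have := inter_mem (hTB s ⟨Or.inl hs, hbs⟩) hV
    obtain ⟨z, hz1, hz2⟩ := hB.nonempty_of_mem this
    exact disjoint_left.1 hUV (hOU (hsO hz1)) hz2
  obtain ⟨y, -, hy⟩ := hy
  have hpick : ∀ O ∈ 𝓝 y, ∃ a ∈ A, x a ∈ O := by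
    intro O hO
    obtain ⟨z, hz, a, ha, rfl⟩ := clusterPt_iff_nonempty.1 hy hO
      (mem_inf_of_right (mem_principal_self (x '' A)))
    exact ⟨a, ha, hz⟩
  have hyα : ∀ a ∈ A, M (x a) y (x b) ∈ (a : Set G) := by
    intro a ha
    obtain ⟨s, hs, hbs⟩ := hCS a (hxS b)
    have hsB : s ∈ B := hTB s ⟨Or.inr (mem_biUnion ha hs), hbs⟩
    exact hCM a s hs y (mem_closure_iff_clusterPt.2 (hy.mono (le_principal_iff.2 hsB)))
      _ (subset_closure hbs)
  have hc : Continuous fun p : G × G => M p.1 p.2 (x b) :=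
    hM.comp (by fun_prop : Continuous fun p : G × G => (p.1, p.2, x b))
  have hn : (fun p : G × G => M p.1 p.2 (x b)) ⁻¹' (b : Set G) ∈ 𝓝 (y, y) :=
    ((hopen b b.2).1.preimage hc).mem_nhds (by simpa [h2] using hxU b)
  rw [nhds_prod_eq, mem_prod_same_iff] at hn
  obtain ⟨O, hO, hOs⟩ := hn
  obtain ⟨a, ha, hxa⟩ := hpick O hO
  have hc' : Continuous fun p : G => M (x a) p (x b) :=
    hM.comp (by fun_prop : Continuous fun p : G => (x a, p, x b))
  have hn' : (fun p : G => M (x a) p (x b)) ⁻¹' (a : Set G) ∈ 𝓝 y :=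
    ((hopen a a.2).1.preimage hc').mem_nhds (hyα a ha)
  obtain ⟨c, hcA, hxc, hxc'⟩ := hpick _ (inter_mem hO hn')
  have hab : (a : Set G) ≠ b := fun h => hbA (Subtype.ext h ▸ ha)
  exact disjoint_left.1 (hdisj a.2 b.2 hab) hxc' (hOs (mk_mem_prod hxa hxc))

/-- The Suslin number of an arbitrary charming rectifiable space is countable: every pairwise
disjoint family of nonempty open subsets is countable. -/
theorem suslin_number_of_charming_rectifiable {G : Type u} [TopologicalSpace G] [T35Space G]
    (hrect : ∃ (φ : G × G ≃ₜ G × G) (e : G),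
      (∀ z : G × G, (φ z).1 = z.1) ∧ ∀ x : G, φ (x, x) = (x, e))
    (hG : IsCharming G)
    (𝒰 : Set (Set G)) (hopen : ∀ U ∈ 𝒰, IsOpen U ∧ U.Nonempty)
    (hdisj : 𝒰.PairwiseDisjoint id) :
    𝒰.Countable := by
  obtain ⟨φ, e, hφ1, hφe⟩ := hrect
  let M : G → G → G → G := fun x y z => (φ.symm (x, (φ (y, z)).2)).2
  have hM : Continuous fun p : G × G × G => M p.1 p.2.1 p.2.2 := by
    have := φ.continuous
    have := φ.symm.continuous
    fun_prop
  have hs1 : ∀ z : G × G, (φ.symm z).1 = z.1 := fun z => by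
    rw [← hφ1 (φ.symm z), φ.apply_symm_apply]
  have h1 : ∀ x y, M x y y = x := fun x y => by
    simp only [M, hφe]
    rw [← hφe x, φ.symm_apply_apply]
  have h2' : ∀ x z w, M x w (M w x z) = z := fun x z w => by
    have e1 : (w, M w x z) = φ.symm (w, (φ (x, z)).2) :=
      Prod.ext (hs1 (w, (φ (x, z)).2)).symm rfl
    have e2 : (x, (φ (x, z)).2) = φ (x, z) := Prod.ext (hφ1 (x, z)).symm rfl
    change (φ.symm (x, (φ (w, M w x z)).2)).2 = z
    rw [e1, φ.apply_symm_apply]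
    simp only
    rw [e2, φ.symm_apply_apply]
  have h2 : ∀ x y, M y y x = x := fun x y => by
    have e2 : (y, (φ (y, x)).2) = φ (y, x) := Prod.ext (hφ1 (y, x)).symm rfl
    simp only [M]
    rw [e2, φ.symm_apply_apply]
  obtain ⟨Y, hY, hYU⟩ := hG
  have hYs := SigSet.of_lindelofSigma hY
  by_cases hd : Dense Y
  · exact ccc_of_maltsev M hM h1 h2 Y hYs hd 𝒰 hopen hdisj
  obtain ⟨v, hv⟩ : ∃ v, v ∉ closure Y := by
    by_contra! h
    exact hd h
  obtain ⟨t, ht, htc, hts⟩ := exists_mem_nhds_isClosed_subset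
    (isClosed_closure.isOpen_compl.mem_nhds hv)
  have htS : SigSet t := by
    have := SigSet.of_lindelofSigma (hYU tᶜ htc.isOpen_compl
      (fun y hy hyt => hts hyt (subset_closure hy)))
    rwa [compl_compl] at this
  have hcM : ∀ a b, Continuous (M a b) := fun a b =>
    hM.comp (by fun_prop : Continuous fun p : G => (a, b, p))
  obtain ⟨Q, hQP, hQc, hQ⟩ := hYs.cover {O | IsOpen O ∧ SigSet O} (fun s hs => hs.1) (by
    intro g
    refine ⟨M v g ⁻¹' interior t, ⟨isOpen_interior.preimage (hcM v g), ?_⟩, ?_⟩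
    · refine (htS.image (M g v) (hcM g v)).mono ?_
      intro z hz
      exact ⟨M v g z, interior_subset hz, h2' g z v⟩
    · change M v g g ∈ interior t
      rw [h1]
      exact mem_interior_iff_mem_nhds.2 ht)
  have hU1 : SigSet (⋃₀ Q) := SigSet.sUnion hQc fun s hs => (hQP hs).2
  have hU2 : SigSet (⋃₀ Q)ᶜ := SigSet.of_lindelofSigma
    (hYU _ (isOpen_sUnion fun s hs => (hQP hs).1) hQ)
  have hall : SigSet (univ : Set G) := by
    have := SigSet.sUnion (P := {⋃₀ Q, (⋃₀ Q)ᶜ}) (by simp) (by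
      rintro s (rfl | rfl)
      · exact hU1
      · exact hU2)
    simpa using this
  exact ccc_of_maltsev M hM h1 h2 univ hall dense_univ 𝒰 hopen hdisj
end
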